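/- arXiv:0801.2505 — 7 statements merged into one kernel-verified Lean document; each statement's English description precedes it below -/
import Mathlib

section
/- Let F ⊂ ℝ^d × ℝ^d be a closed symmetric set such that F ∩ (ℝ^d × B) is bounded whenever B ⊂ ℝ^d is bounded. Then for any two locally finite nonnegative Borel measures ν₁, ν₂ on ℝ^d, the following are equivalent: (i) there exists a transportation γ from ν₁ to ν₂ with spt(γ) ⊆ F; (ii) for every compact set C ⊂ ℝ^d, ν₁(C) ≤ ν₂(C_{+F}) and ν₂(C) ≤ ν₁(C_{+F}). -/
/-!
The forward implication is `γ (C × ℝ^d) = γ (F ∩ (C × ℝ^d)) ≤ γ (ℝ^d × C_{+F})`, as `γ` does not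
charge the complement of `F`.

For the converse, both coordinate projections `F → ℝ^d` are proper, so `φ ↦ φ(x)` and `ψ ↦ ψ(y)`
map `C_c(ℝ^d)` into `C_c(F)`. On the subspace of `C_c(F)` formed by the functions `φ(x) + ψ(y)`,
consider the functional `φ(x) + ψ(y) ↦ ∫ φ dν₁ + ∫ ψ dν₂`. It is nonnegative on nonnegative
functions: if `-φ(x) ≤ ψ(y)` on `F`, then `{-φ ≥ t}_{+F} ⊆ {ψ ≥ t}` for every `t > 0`, and
integrating the hypothesis over the compact superlevel sets (layer cake) gives
`∫ φ⁻ dν₁ ≤ ∫ ψ⁺ dν₂`; symmetrically `∫ ψ⁻ dν₂ ≤ ∫ φ⁺ dν₁` (`add_integral_nonneg`).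
In particular the functional is well defined. The M. Riesz extension theorem extends it to a
positive functional on all of `C_c(F)`, and the Riesz–Markov–Kakutani theorem represents the
extension by a measure on `F` (`exists_coupling`), whose image in `ℝ^d × ℝ^d` is the required
transportation. No approximation by discrete measures is needed.
-/

open MeasureTheory Metric Set Bornology
open scoped ENNReal RealInnerProductSpace

noncomputable section

/-- `d`-dimensional Euclidean space. -/
abbrev Euc (d : ℕ) : Type := EuclideanSpace ℝ (Fin d)

/-- The closed support of a measure: the set of points all of whose neighbourhoods
have positive measure. -/
def msupport {X : Type*} [TopologicalSpace X] [MeasurableSpace X] (μ : Measure X) : Set X :=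
  {x | ∀ U ∈ nhds x, μ U ≠ 0}

/-- `γ` is a transportation from `ν₁` to `ν₂`: a locally finite nonnegative Borel measure
on the product whose first marginal is `ν₁` and whose second marginal is `ν₂`. -/
def IsTransport {d : ℕ} (ν₁ ν₂ : Measure (Euc d)) (γ : Measure (Euc d × Euc d)) : Prop :=
  IsLocallyFiniteMeasure γ ∧ γ.map Prod.fst = ν₁ ∧ γ.map Prod.snd = ν₂

/-- The transportation distance `Tra(ν₁, ν₂)`: the infimum over all transportations `γ`
of `sup {|x−y| : (x,y) ∈ spt γ}`, with value `∞` if no transportation exists. -/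
def Tra {d : ℕ} (ν₁ ν₂ : Measure (Euc d)) : ℝ≥0∞ :=
  ⨅ γ : {γ : Measure (Euc d × Euc d) // IsTransport ν₁ ν₂ γ},
    ⨆ p ∈ msupport γ.1, edist p.1 p.2

/-- The dual distance `Di(ν₁, ν₂)`: the infimum of those `r ∈ (0,∞)` such that
`ν₁ B ≤ ν₂ (B_{+r})` and `ν₂ B ≤ ν₁ (B_{+r})` for every bounded Borel set `B`,
where `B_{+r}` is the closed `r`-neighbourhood of `B` (`inf ∅ = ∞`). -/
def Di {d : ℕ} (ν₁ ν₂ : Measure (Euc d)) : ℝ≥0∞ :=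
  sInf (ENNReal.ofReal ''
    {r : ℝ | 0 < r ∧ ∀ B : Set (Euc d), IsBounded B → MeasurableSet B →
      ν₁ B ≤ ν₂ (cthickening r B) ∧ ν₂ B ≤ ν₁ (cthickening r B)})

/-- The normalized indicator `χ_r` of the closed ball of radius `r` centered at the origin. -/
def chi (d : ℕ) (r : ℝ) (x : Euc d) : ℝ :=
  (volume (closedBall (0 : Euc d) r)).toReal⁻¹ * (closedBall (0 : Euc d) r).indicator 1 x

/-- The convolution `v * χ_r` of a vector field `v` with the normalized indicator `χ_r`. -/
def convChi {d : ℕ} (v : Euc d → Euc d) (r : ℝ) (x : Euc d) : Euc d :=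
  ∫ y, chi d r (x - y) • v y

/-- `Ra(v) = inf_{r>0} { r + ‖v * χ_r‖_∞ }`. -/
def Ra {d : ℕ} (v : Euc d → Euc d) : ℝ≥0∞ :=
  ⨅ (r : ℝ) (_ : 0 < r),
    ENNReal.ofReal r + essSup (fun x => (‖convChi v r x‖₊ : ℝ≥0∞)) volume

/-- `R̃a(v) = inf_{r>0} { r + ‖ |v| * χ_r ‖_∞ }`. -/
def RaTilde {d : ℕ} (v : Euc d → Euc d) : ℝ≥0∞ :=
  ⨅ (r : ℝ) (_ : 0 < r),
    ENNReal.ofReal r +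
      essSup (fun x => ∫⁻ y, ENNReal.ofReal (chi d r (x - y)) * (‖v y‖₊ : ℝ≥0∞)) volume

/-- The vector field `v` connects the measures `ν` and `m_d`: `div v = ν − m_d` weakly,
i.e. `∫ ⟨v, ∇φ⟩ dm_d = −∫ φ d(ν − m_d)` for all smooth compactly supported `φ`. -/
def Connects {d : ℕ} (v : Euc d → Euc d) (ν : Measure (Euc d)) : Prop :=
  ∀ φ : Euc d → ℝ, ContDiff ℝ (⊤ : ℕ∞) φ → HasCompactSupport φ →
    ∫ x, ⟪v x, gradient φ x⟫ ∂volume = (∫ x, φ x ∂volume) - ∫ x, φ x ∂ν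

/-- The Laplacian of `u : ℝ^d → ℝ`, as the sum of the second partial derivatives
along the coordinate directions. -/
def lap {d : ℕ} (u : Euc d → ℝ) (x : Euc d) : ℝ :=
  ∑ i : Fin d,
    fderiv ℝ (fun y => fderiv ℝ u y (EuclideanSpace.single i (1 : ℝ))) x
      (EuclideanSpace.single i (1 : ℝ))

/-- The unit lattice cube `∏ i [aᵢ, aᵢ+1]` with integer corner `a`. -/
def latticeCube {d : ℕ} (a : Fin d → ℤ) : Set (Euc d) :=
  {x | ∀ i, (a i : ℝ) ≤ x i ∧ x i ≤ (a i : ℝ) + 1}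

/-- `U` is a finite union of unit lattice cubes. -/
def IsFiniteUnionUnitCubes {d : ℕ} (U : Set (Euc d)) : Prop :=
  ∃ s : Finset (Fin d → ℤ), U = ⋃ a ∈ s, latticeCube a

/-- `U_{+F} = {x : ∃ y ∈ U, (x,y) ∈ F}`. -/
def plusF {d : ℕ} (F : Set (Euc d × Euc d)) (U : Set (Euc d)) : Set (Euc d) :=
  {x | ∃ y ∈ U, (x, y) ∈ F}

/-- The point of `ℝ^d` with integer coordinates `z ∈ ℤ^d`. -/
def latticePoint {d : ℕ} (z : Fin d → ℤ) : Euc d :=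
  (WithLp.equiv 2 (Fin d → ℝ)).symm fun i => (z i : ℝ)

/-- The uniform probability measure on the closed unit ball centered at `x`. -/
def eta {d : ℕ} (x : Euc d) : Measure (Euc d) :=
  (volume (closedBall x 1))⁻¹ • volume.restrict (closedBall x 1)

/-- The measure `ν * χ_r`, with density `x ↦ ∫ χ_r(x−y) dν(y)` w.r.t. Lebesgue measure. -/
def convMeasure {d : ℕ} (ν : Measure (Euc d)) (r : ℝ) : Measure (Euc d) :=
  volume.withDensity fun x => ∫⁻ y, ENNReal.ofReal (chi d r (x - y)) ∂ν

open scoped CompactlySupported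
open CompactlySupportedContinuousMap

/-- Layer cake comparison: the hypothesis on compact sets, applied to the superlevel sets of `u`,
compares the integrals of positive parts. -/
lemma lintegral_posPart_le {d : ℕ} {F : Set (Euc d × Euc d)}
    (hFsym : ∀ x y : Euc d, (x, y) ∈ F → (y, x) ∈ F) {μ ν : Measure (Euc d)}
    (H : ∀ C : Set (Euc d), IsCompact C → μ C ≤ ν (plusF F C))
    (u v : C_c(Euc d, ℝ)) (huv : ∀ x y, (x, y) ∈ F → u x ≤ v y) :
    ∫⁻ x, ENNReal.ofReal (u x) ∂μ ≤ ∫⁻ x, ENNReal.ofReal (v x) ∂ν := by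
  have key : ∀ (w : C_c(Euc d, ℝ)) (ρ : Measure (Euc d)),
      ∫⁻ x, ENNReal.ofReal (w x) ∂ρ = ∫⁻ t in Ioi (0 : ℝ), ρ {x | t ≤ w x} := by
    intro w ρ
    have h := lintegral_eq_lintegral_meas_le ρ (f := fun x => max (w x) 0)
      (Filter.Eventually.of_forall fun x => le_max_right _ _)
      ((map_continuous w).max continuous_const).measurable.aemeasurable
    have h1 : ∀ x, ENNReal.ofReal (max (w x) 0) = ENNReal.ofReal (w x) := fun x => by
      rw [ENNReal.ofReal_max]; simp
    simp only [h1] at h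
    rw [h]
    refine setLIntegral_congr_fun measurableSet_Ioi fun t ht => ?_
    have ht : 0 < t := ht
    simp [not_le.mpr ht]
  rw [key, key]
  refine setLIntegral_mono' measurableSet_Ioi fun t ht => ?_
  have ht : 0 < t := ht
  have hc : IsCompact {x | t ≤ u x} := by
    refine u.hasCompactSupport.isCompact.of_isClosed_subset
      (isClosed_le continuous_const (map_continuous u)) fun x hx => subset_tsupport _ ?_
    exact (ht.trans_le hx).ne'
  refine (H _ hc).trans (measure_mono ?_)
  rintro y ⟨x, hx, hyx⟩
  exact le_trans (α := ℝ) hx (huv x y (hFsym _ _ hyx))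

/-- The functional `φ(x) + ψ(y) ↦ ∫ φ dν₁ + ∫ ψ dν₂` is nonnegative on functions that are
nonnegative on `F`. -/
lemma add_integral_nonneg {d : ℕ} {F : Set (Euc d × Euc d)}
    (hFsym : ∀ x y : Euc d, (x, y) ∈ F → (y, x) ∈ F) {ν₁ ν₂ : Measure (Euc d)}
    [IsLocallyFiniteMeasure ν₁] [IsLocallyFiniteMeasure ν₂]
    (H : ∀ C : Set (Euc d), IsCompact C → ν₁ C ≤ ν₂ (plusF F C) ∧ ν₂ C ≤ ν₁ (plusF F C))
    (φ ψ : C_c(Euc d, ℝ)) (h : ∀ x y, (x, y) ∈ F → 0 ≤ φ x + ψ y) :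
    0 ≤ ∫ x, φ x ∂ν₁ + ∫ x, ψ x ∂ν₂ := by
  have h1 := lintegral_posPart_le hFsym (fun C hC => (H C hC).1) (-φ) ψ
    fun x y hxy => by have := h x y hxy; rw [CompactlySupportedContinuousMap.neg_apply]; linarith
  have h2 := lintegral_posPart_le hFsym (fun C hC => (H C hC).2) (-ψ) φ
    fun x y hxy => by have := h y x (hFsym _ _ hxy); rw [CompactlySupportedContinuousMap.neg_apply]; linarith
  have h3 := ENNReal.toReal_mono ψ.integrable.lintegral_lt_top.ne h1
  have h4 := ENNReal.toReal_mono φ.integrable.lintegral_lt_top.ne h2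
  simp only [CompactlySupportedContinuousMap.neg_apply] at h3 h4
  rw [integral_eq_lintegral_pos_part_sub_lintegral_neg_part φ.integrable,
    integral_eq_lintegral_pos_part_sub_lintegral_neg_part ψ.integrable]
  linarith

/-- Abstract existence of couplings: if `p, q : X → Y` are proper and the functional
`φ ∘ p + ψ ∘ q ↦ ∫ φ dν₁ + ∫ ψ dν₂` is positive, then some measure on `X` induces it. -/
lemma exists_coupling {X Y : Type*} [TopologicalSpace X] [T2Space X] [LocallyCompactSpace X]
    [MeasurableSpace X] [BorelSpace X] [TopologicalSpace Y] [T2Space Y] [LocallyCompactSpace Y]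
    [MeasurableSpace Y] [BorelSpace Y] (p q : CocompactMap X Y) (ν₁ ν₂ : Measure Y)
    [IsFiniteMeasureOnCompacts ν₁] [IsFiniteMeasureOnCompacts ν₂]
    (H : ∀ φ ψ : C_c(Y, ℝ), (∀ z, 0 ≤ φ (p z) + ψ (q z)) →
      0 ≤ ∫ x, φ x ∂ν₁ + ∫ x, ψ x ∂ν₂) :
    ∃ μ : Measure X, μ.Regular ∧ (∀ φ : C_c(Y, ℝ), ∫ z, φ (p z) ∂μ = ∫ x, φ x ∂ν₁) ∧
      ∀ ψ : C_c(Y, ℝ), ∫ z, ψ (q z) ∂μ = ∫ x, ψ x ∂ν₂ := by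
  let T : (C_c(Y, ℝ) × C_c(Y, ℝ)) →ₗ[ℝ] C_c(X, ℝ) :=
    (compLinearMap p).coprod (compLinearMap q)
  let L : (C_c(Y, ℝ) × C_c(Y, ℝ)) →ₗ[ℝ] ℝ :=
    (integralPositiveLinearMap ν₁).toLinearMap.coprod (integralPositiveLinearMap ν₂).toLinearMap
  have hT : ∀ w z, T w z = w.1 (p z) + w.2 (q z) := fun w z => rfl
  have hL : ∀ w, L w = ∫ x, w.1 x ∂ν₁ + ∫ x, w.2 x ∂ν₂ := fun w => rfl
  have hpos : ∀ w, 0 ≤ T w → 0 ≤ L w := fun w hw => by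
    rw [hL]
    exact H _ _ fun z => by rw [← hT]; exact hw z
  -- Positivity forces `L` to vanish on the kernel of `T`, so `L` descends to the range of `T`.
  have hker : ∀ w, T w = 0 → L w = 0 := fun w hw => by
    refine le_antisymm ?_ (hpos w hw.ge)
    have := hpos (-w) (by rw [map_neg, hw, neg_zero])
    rw [map_neg] at this
    linarith
  have hwd : ∀ v w, T v = T w → L v = L w := fun v w h => by
    have := hker (v - w) (by rw [map_sub, h, sub_self])
    rwa [map_sub, sub_eq_zero] at this
  choose g hTg using fun s : LinearMap.range T => s.2
  let f : C_c(X, ℝ) →ₗ.[ℝ] ℝ := ⟨LinearMap.range T,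
    { toFun := fun s => L (g s)
      map_add' := fun s t => by
        rw [← map_add]
        exact hwd _ _ (by rw [map_add, hTg, hTg, hTg]; rfl)
      map_smul' := fun c s => by
        rw [RingHom.id_apply, ← map_smul]
        exact hwd _ _ (by rw [map_smul, hTg, hTg]; rfl) }⟩
  have hf : ∀ w, f ⟨T w, w, rfl⟩ = L w := fun w => hwd _ _ (hTg ⟨T w, w, rfl⟩)
  have : PosSMulMono ℝ C_c(X, ℝ) := ⟨fun c hc u v huv z =>
    mul_le_mul_of_nonneg_left (huv z) hc⟩
  obtain ⟨G, hGf, hG⟩ := riesz_extension (PointedCone.positive ℝ C_c(X, ℝ)) f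
    (fun s hs => hpos (g s) (by rw [hTg]; exact hs)) (fun y => by
      -- Every `y` in `C_c(X)` is dominated by `c • k ∘ p`, where `k = 1` on `p (tsupport y)`.
      obtain ⟨k, hk1, -, hkc, hk0⟩ := exists_continuous_one_zero_of_isCompact
        (y.hasCompactSupport.isCompact.image (map_continuous p)) isClosed_empty
        (disjoint_empty _)
      obtain ⟨c, hc⟩ := y.hasCompactSupport.exists_bound_of_continuous (map_continuous y)
      let k' : C_c(Y, ℝ) := ⟨k, hkc⟩
      refine ⟨⟨T (c • k', 0), _, rfl⟩, ?_⟩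
      rw [PointedCone.mem_positive]
      intro z
      change 0 ≤ T (c • k', 0) z + y z
      have e : T (c • k', 0) z = c * k (p z) := by
        rw [hT]; exact add_zero _
      rw [e]
      have hcz := hc z
      rw [Real.norm_eq_abs] at hcz
      by_cases hz : z ∈ tsupport y
      · have : k (p z) = 1 := hk1 ⟨z, hz, rfl⟩
        rw [this]
        linarith [neg_abs_le (y z)]
      · rw [image_eq_zero_of_notMem_tsupport hz, add_zero]
        exact mul_nonneg ((abs_nonneg _).trans hcz) (hk0 _).1)
  let Λ : C_c(X, ℝ) →ₚ[ℝ] ℝ := PositiveLinearMap.mk₀ G fun x hx => hG x hx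
  have hΛ : ∀ w, ∫ z, T w z ∂(RealRMK.rieszMeasure Λ) = L w := fun w => by
    rw [RealRMK.integral_rieszMeasure, ← hf]
    exact hGf ⟨T w, w, rfl⟩
  refine ⟨RealRMK.rieszMeasure Λ, inferInstance, fun φ => ?_, fun ψ => ?_⟩
  · simpa [hT, hL] using hΛ (φ, 0)
  · simpa [hT, hL] using hΛ (0, ψ)

lemma map_eq_of_integral_eq {X : Type*} [TopologicalSpace X] [MeasurableSpace X]
    [BorelSpace X] {d : ℕ} (p : CocompactMap X (Euc d)) (μ : Measure X)
    [IsFiniteMeasureOnCompacts μ] (ν : Measure (Euc d)) [IsLocallyFiniteMeasure ν]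
    (h : ∀ φ : C_c(Euc d, ℝ), ∫ z, φ (p z) ∂μ = ∫ x, φ x ∂ν) : μ.map p = ν := by
  have hp : Measurable p := (map_continuous p).measurable
  have : IsFiniteMeasureOnCompacts (μ.map p) := ⟨fun K hK => by
    rw [Measure.map_apply hp hK.measurableSet]
    exact (p.isCompact_preimage_of_isClosed hK hK.isClosed).measure_lt_top⟩
  refine Measure.ext_of_integral_eq_on_compactlySupported fun φ => ?_
  rw [← h, integral_map hp.aemeasurable (map_continuous φ).aestronglyMeasurable]

lemma isCompact_inter_snd {d : ℕ} {F : Set (Euc d × Euc d)} (hFclosed : IsClosed F)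
    (hFbdd : ∀ B : Set (Euc d), IsBounded B → IsBounded (F ∩ univ ×ˢ B))
    {K : Set (Euc d)} (hK : IsCompact K) : IsCompact (F ∩ Prod.snd ⁻¹' K) := by
  refine isCompact_of_isClosed_isBounded
    (hFclosed.inter (hK.isClosed.preimage continuous_snd)) ?_
  have := hFbdd K hK.isBounded
  rwa [univ_prod] at this

lemma isCompact_inter_fst {d : ℕ} {F : Set (Euc d × Euc d)} (hFclosed : IsClosed F)
    (hFsym : ∀ x y : Euc d, (x, y) ∈ F → (y, x) ∈ F)
    (hFbdd : ∀ B : Set (Euc d), IsBounded B → IsBounded (F ∩ univ ×ˢ B))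
    {K : Set (Euc d)} (hK : IsCompact K) : IsCompact (F ∩ Prod.fst ⁻¹' K) := by
  have e : F ∩ Prod.fst ⁻¹' K = Prod.swap '' (F ∩ Prod.snd ⁻¹' K) := by
    ext ⟨x, y⟩
    constructor
    · rintro ⟨h1, h2⟩
      exact ⟨(y, x), ⟨hFsym _ _ h1, h2⟩, rfl⟩
    · rintro ⟨⟨a, b⟩, ⟨h1, h2⟩, h⟩
      obtain ⟨rfl, rfl⟩ := Prod.mk.inj h
      exact ⟨hFsym _ _ h1, h2⟩
  rw [e]
  exact (isCompact_inter_snd hFclosed hFbdd hK).image continuous_swap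

/-- The restriction to a closed set `F` of a continuous map whose preimages of compact sets meet
`F` in compact sets, as a proper map on `F`. -/
def restrictCocompact {Z Y : Type*} [TopologicalSpace Z] [TopologicalSpace Y] {F : Set Z}
    (hF : IsClosed F) (p : C(Z, Y)) (hp : ∀ K : Set Y, IsCompact K → IsCompact (F ∩ p ⁻¹' K)) :
    CocompactMap F Y where
  toFun z := p z
  continuous_toFun := p.continuous.comp continuous_subtype_val
  cocompact_tendsto' := by
    refine Filter.hasBasis_cocompact.tendsto_right_iff.mpr fun K hK => ?_
    have h := hF.isClosedEmbedding_subtypeVal.isCompact_preimage (hp K hK)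
    filter_upwards [h.compl_mem_cocompact] with z hz hzK
    exact hz ⟨z.2, hzK⟩

/-- A transportation supported in `F` moves the mass of `C` into `C_{+F}`. -/
lemma measure_le_of_support {d : ℕ} {F : Set (Euc d × Euc d)}
    (hFsym : ∀ x y : Euc d, (x, y) ∈ F → (y, x) ∈ F)
    {ν₁ ν₂ : Measure (Euc d)} {γ : Measure (Euc d × Euc d)} (hγ : IsTransport ν₁ ν₂ γ)
    (hs : msupport γ ⊆ F) {C : Set (Euc d)} (hC : IsCompact C) :
    ν₁ C ≤ ν₂ (plusF F C) ∧ ν₂ C ≤ ν₁ (plusF F C) := by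
  obtain ⟨-, rfl, rfl⟩ := hγ
  have hsupp : γ.support ⊆ F := fun z hz => hs fun U hU =>
    ((Measure.mem_support_iff_forall z).mp hz U hU).ne'
  have hae : ∀ᵐ z ∂γ, z ∈ F := Filter.mem_of_superset Measure.support_mem_ae hsupp
  rw [Measure.map_apply measurable_fst hC.measurableSet,
    Measure.map_apply measurable_snd hC.measurableSet]
  constructor
  · refine (measure_mono_ae ?_).trans (Measure.le_map_apply measurable_snd.aemeasurable _)
    filter_upwards [hae] with z hz hzC
    exact ⟨z.1, hzC, hFsym _ _ hz⟩
  · refine (measure_mono_ae ?_).trans (Measure.le_map_apply measurable_fst.aemeasurable _)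
    filter_upwards [hae] with z hz hzC
    exact ⟨z.2, hzC, hz⟩

/-- Let `F ⊆ ℝ^d × ℝ^d` be a closed symmetric set such that
`F ∩ (ℝ^d × B)` is bounded whenever `B` is bounded. Then for locally finite nonnegative
Borel measures `ν₁, ν₂` the following are equivalent: (i) there is a transportation `γ`
from `ν₁` to `ν₂` with `spt γ ⊆ F`; (ii) `ν₁ C ≤ ν₂ (C_{+F})` and `ν₂ C ≤ ν₁ (C_{+F})`
for every compact `C`. -/
theorem stmt_5 (d : ℕ) (hd : 1 ≤ d) (F : Set (Euc d × Euc d))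
    (hFclosed : IsClosed F) (hFsym : ∀ x y : Euc d, (x, y) ∈ F → (y, x) ∈ F)
    (hFbdd : ∀ B : Set (Euc d), IsBounded B → IsBounded (F ∩ univ ×ˢ B))
    (ν₁ ν₂ : Measure (Euc d)) [IsLocallyFiniteMeasure ν₁] [IsLocallyFiniteMeasure ν₂] :
    (∃ γ : Measure (Euc d × Euc d), IsTransport ν₁ ν₂ γ ∧ msupport γ ⊆ F) ↔
      ∀ C : Set (Euc d), IsCompact C → ν₁ C ≤ ν₂ (plusF F C) ∧ ν₂ C ≤ ν₁ (plusF F C) := by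
  refine ⟨fun ⟨γ, hγ, hs⟩ C hC => measure_le_of_support hFsym hγ hs hC, fun H => ?_⟩
  let p : CocompactMap F (Euc d) := restrictCocompact hFclosed ContinuousMap.fst
    fun K hK => isCompact_inter_fst hFclosed hFsym hFbdd hK
  let q : CocompactMap F (Euc d) := restrictCocompact hFclosed ContinuousMap.snd
    fun K hK => isCompact_inter_snd hFclosed hFbdd hK
  have : LocallyCompactSpace F := hFclosed.locallyCompactSpace
  obtain ⟨μ, hμ, hμ1, hμ2⟩ := exists_coupling p q ν₁ ν₂ fun φ ψ h =>
    add_integral_nonneg hFsym H φ ψ fun x y hxy => h ⟨(x, y), hxy⟩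
  have hval : Measurable (Subtype.val : F → Euc d × Euc d) := measurable_subtype_coe
  have hfin : IsFiniteMeasureOnCompacts (μ.map Subtype.val) := ⟨fun K hK => by
    rw [Measure.map_apply hval hK.measurableSet]
    exact (hFclosed.isClosedEmbedding_subtypeVal.isCompact_preimage hK).measure_lt_top⟩
  refine ⟨μ.map Subtype.val, ⟨inferInstance, ?_, ?_⟩, fun z hz => ?_⟩
  · rw [Measure.map_map measurable_fst hval]
    exact map_eq_of_integral_eq p μ ν₁ hμ1
  · rw [Measure.map_map measurable_snd hval]
    exact map_eq_of_integral_eq q μ ν₂ hμ2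
  · by_contra hzF
    refine hz Fᶜ (hFclosed.isOpen_compl.mem_nhds hzF) ?_
    rw [Measure.map_apply hval hFclosed.measurableSet.compl]
    simp
end
end

section
/- (Laczkovich's lemma.) There is a constant C > 0 depending only on the dimension d such that the following holds. Let ν be a locally finite nonnegative Borel measure on ℝ^d and let ρ ≥ 1. Suppose that for every set U ⊂ ℝ^d that is a finite union of unit lattice cubes (cubes of the form ∏_{i=1}^d [a_i, a_i + 1] with a_i ∈ ℤ), one has |ν(U) − m_d(U)| ≤ ρ · H^{d−1}(∂U), where H^{d−1} is the (d−1)-dimensional Hausdorff measure and ∂U is the topological boundary of U. Then D(ν) ≤ C·ρ. -/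
/-!
Let `l` be an integer comparable to `ρ`, and tile `ℝ^d` by the cubes of side `l` of the lattice
`l ℤ^d`. Given a bounded set `B`, let `s` be the finite set of half-open cubes meeting `B`, let `t` be
`s` together with all cubes touching a cube of `s`, and let `U ⊆ V` be the corresponding unions.
Then `B ⊆ U` and `V` lies in the `2 l √d`-neighbourhood of `B`.

The boundaries `∂U` and `∂V` are both covered by the boundaries of the collar cubes `t \ s`
(`frontier_gridUnion_subset`, `frontier_gridUnion_fatten_subset`). The boundary of one cube has
`H^{d-1}`-measure at most `K l^{d-1}` with `K` depending only on `d`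
(`hausdorffMeasure_gridFacets_le`), so if `K ρ ≤ l` then `ρ H^{d-1}(∂U)` and `ρ H^{d-1}(∂V)` are
both at most `#(t \ s) l^d = m_d(V) - m_d(U)` (`mul_hausdorffMeasure_le`). The hypothesis for
`U` then gives `ν B ≤ ν U ≤ m_d V`, and the hypothesis for `V` gives `m_d B ≤ m_d U ≤ ν V`.
-/

open MeasureTheory Metric Set Bornology
open scoped ENNReal RealInnerProductSpace

noncomputable section

open scoped NNReal

/-! ### Grid cubes and their volume -/

/-- The closed cube `∏ i [l aᵢ, l aᵢ + l]` of the lattice `l ℤ^d`. -/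
def gridCube {d : ℕ} (l : ℕ) (a : Fin d → ℤ) : Set (Euc d) :=
  {x | ∀ i, (l : ℝ) * a i ≤ x i ∧ x i ≤ (l : ℝ) * a i + l}

/-- The half-open version of `gridCube`; for fixed `l > 0` these cubes tile the space. -/
def gridCubeHO {d : ℕ} (l : ℕ) (a : Fin d → ℤ) : Set (Euc d) :=
  {x | ∀ i, (l : ℝ) * a i ≤ x i ∧ x i < (l : ℝ) * a i + l}

/-- The union of the closed grid cubes of side `l` indexed by `s`. -/
def gridUnion {d : ℕ} (l : ℕ) (s : Finset (Fin d → ℤ)) : Set (Euc d) :=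
  ⋃ a ∈ s, gridCube l a

/-- The union of the `2d` closed facets of a grid cube, i.e. its topological boundary. -/
def gridFacets {d : ℕ} (l : ℕ) (a : Fin d → ℤ) : Set (Euc d) :=
  {x | x ∈ gridCube l a ∧ ∃ i, x i = (l : ℝ) * a i ∨ x i = (l : ℝ) * a i + l}

/-- The index of the half-open grid cube containing `x` (for `l > 0`). -/
def gridIndex {d : ℕ} (l : ℕ) (x : Euc d) : Fin d → ℤ := fun i => ⌊x i / l⌋

/-- The indices of the cubes of `s` and of all cubes touching one of them. -/
def fatten {d : ℕ} (s : Finset (Fin d → ℤ)) : Finset (Fin d → ℤ) :=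
  s.biUnion fun b => Finset.Icc (b - 1) (b + 1)

lemma mem_fatten {d : ℕ} {s : Finset (Fin d → ℤ)} {a : Fin d → ℤ} :
    a ∈ fatten s ↔ ∃ b ∈ s, ∀ i, b i - 1 ≤ a i ∧ a i ≤ b i + 1 := by
  simp [fatten, Pi.le_def, forall_and]

lemma subset_fatten {d : ℕ} (s : Finset (Fin d → ℤ)) : s ⊆ fatten s := fun a ha =>
  mem_fatten.2 ⟨a, ha, fun i => ⟨by omega, by omega⟩⟩

lemma gridCubeHO_subset {d : ℕ} (l : ℕ) (a : Fin d → ℤ) : gridCubeHO l a ⊆ gridCube l a :=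
  fun _ hx i => ⟨(hx i).1, (hx i).2.le⟩

lemma mem_gridCubeHO_iff {d : ℕ} {l : ℕ} (hl : 0 < l) (a : Fin d → ℤ) (x : Euc d) :
    x ∈ gridCubeHO l a ↔ gridIndex l x = a := by
  have hl' : (0 : ℝ) < l := by exact_mod_cast hl
  simp only [gridCubeHO, gridIndex, mem_ofPred_eq, funext_iff, Int.floor_eq_iff]
  refine forall_congr' fun i => ?_
  rw [le_div_iff₀ hl', div_lt_iff₀ hl']
  constructor <;> rintro ⟨h1, h2⟩ <;> constructor <;> nlinarith

lemma mem_gridCube_gridIndex {d : ℕ} {l : ℕ} (hl : 0 < l) (x : Euc d) :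
    x ∈ gridCube l (gridIndex l x) :=
  gridCubeHO_subset l _ ((mem_gridCubeHO_iff hl _ x).2 rfl)

lemma isClosed_gridCube {d : ℕ} (l : ℕ) (a : Fin d → ℤ) : IsClosed (gridCube l a) := by
  simp only [gridCube, ofPred_forall, ofPred_and]
  refine isClosed_iInter fun i => IsClosed.inter ?_ ?_
  · exact isClosed_le continuous_const (by fun_prop)
  · exact isClosed_le (by fun_prop) continuous_const

lemma measurableSet_gridCubeHO {d : ℕ} (l : ℕ) (a : Fin d → ℤ) :
    MeasurableSet (gridCubeHO l a) := by
  simp only [gridCubeHO, ofPred_forall, ofPred_and]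
  refine MeasurableSet.iInter fun i => MeasurableSet.inter ?_ ?_
  · exact measurableSet_le measurable_const (by fun_prop)
  · exact measurableSet_lt (by fun_prop) measurable_const

lemma volume_gridCube {d : ℕ} (l : ℕ) (a : Fin d → ℤ) :
    volume (gridCube l a) = (l : ℝ≥0∞) ^ d := by
  have h := (PiLp.volume_preserving_ofLp (Fin d)).measure_preimage
    (measurableSet_Icc (a := fun i => (l : ℝ) * a i)
      (b := fun i => (l : ℝ) * a i + l)).nullMeasurableSet
  rw [Real.volume_Icc_pi] at h
  simp only [add_sub_cancel_left, ENNReal.ofReal_natCast, Finset.prod_const, Finset.card_univ,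
    Fintype.card_fin] at h
  rw [← h]
  congr 1
  ext x
  simp [gridCube, Pi.le_def, forall_and]

lemma volume_gridCubeHO {d : ℕ} (l : ℕ) (a : Fin d → ℤ) :
    volume (gridCubeHO l a) = (l : ℝ≥0∞) ^ d := by
  have h := (PiLp.volume_preserving_ofLp (Fin d)).measure_preimage
    (MeasurableSet.univ_pi fun i => measurableSet_Ico (a := (l : ℝ) * a i)
      (b := (l : ℝ) * a i + l)).nullMeasurableSet
  rw [Real.volume_pi_Ico] at h
  simp only [add_sub_cancel_left, ENNReal.ofReal_natCast, Finset.prod_const, Finset.card_univ,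
    Fintype.card_fin] at h
  rw [← h]
  congr 1
  ext x
  simp [gridCubeHO]

lemma volume_gridUnion_le {d : ℕ} (l : ℕ) (s : Finset (Fin d → ℤ)) :
    volume (gridUnion l s) ≤ s.card * (l : ℝ≥0∞) ^ d := by
  refine (measure_biUnion_finset_le s _).trans ?_
  simp [volume_gridCube]

lemma le_volume_gridUnion {d : ℕ} {l : ℕ} (hl : 0 < l) (s : Finset (Fin d → ℤ)) :
    s.card * (l : ℝ≥0∞) ^ d ≤ volume (gridUnion l s) := by
  have h : volume (⋃ a ∈ s, gridCubeHO l a) = s.card * (l : ℝ≥0∞) ^ d := by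
    rw [measure_biUnion_finset _ fun a _ => measurableSet_gridCubeHO l a]
    · simp [volume_gridCubeHO]
    · intro a _ b _ hab
      refine Set.disjoint_left.2 fun x hxa hxb => hab ?_
      rw [mem_gridCubeHO_iff hl] at hxa hxb
      exact hxa.symm.trans hxb
  rw [← h]
  exact measure_mono (iUnion₂_mono fun a _ => gridCubeHO_subset l a)

/-- A grid cube of side `l` splits into `l ^ d` unit lattice cubes. -/
lemma isFiniteUnionUnitCubes_gridUnion {d : ℕ} {l : ℕ} (hl : 0 < l) (s : Finset (Fin d → ℤ)) :
    IsFiniteUnionUnitCubes (gridUnion l s) := by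
  refine ⟨s.biUnion fun a => Fintype.piFinset fun i => Finset.Ico (l * a i) (l * a i + l), ?_⟩
  ext x
  simp only [gridUnion, mem_iUnion, Finset.mem_biUnion, Fintype.mem_piFinset, Finset.mem_Ico,
    exists_prop]
  constructor
  · rintro ⟨a, ha, hx⟩
    -- The minimum handles points on the upper facets, whose integer part is one too large.
    refine ⟨fun i => min ⌊x i⌋ (l * a i + l - 1), ⟨a, ha, fun i => ?_⟩, fun i => ?_⟩
    · have : (l * a i : ℤ) ≤ ⌊x i⌋ := Int.le_floor.2 (by push_cast; exact (hx i).1)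
      dsimp only
      omega
    · have h1 := Int.floor_le (x i)
      have h2 := Int.lt_floor_add_one (x i)
      have h3 := (hx i).2
      have hlt : (⌊x i⌋ : ℤ) ≤ l * a i + l := by
        have : (⌊x i⌋ : ℝ) ≤ ((l * a i + l : ℤ) : ℝ) := by push_cast; linarith
        exact_mod_cast this
      dsimp only
      rcases le_total ⌊x i⌋ (l * a i + l - 1) with h | h
      · rw [min_eq_left h]
        exact ⟨h1, h2.le⟩
      · rw [min_eq_right h]
        have : ((l * a i + l - 1 : ℤ) : ℝ) ≤ ⌊x i⌋ := by exact_mod_cast h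
        push_cast at this ⊢
        constructor <;> linarith
  · rintro ⟨b, ⟨a, ha, hb⟩, hx⟩
    refine ⟨a, ha, fun i => ?_⟩
    have h1 : ((l * a i : ℤ) : ℝ) ≤ b i := by exact_mod_cast (hb i).1
    have h2 : ((b i + 1 : ℤ) : ℝ) ≤ ((l * a i + l : ℤ) : ℝ) := by exact_mod_cast (hb i).2
    push_cast at h1 h2
    have := hx i
    constructor <;> linarith

/-! ### Boundaries of unions of grid cubes -/

lemma locallyFinite_gridCube {d : ℕ} {l : ℕ} (hl : 0 < l) :
    LocallyFinite (gridCube l : (Fin d → ℤ) → Set (Euc d)) := by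
  intro x
  have hl' : (0 : ℝ) < l := by exact_mod_cast hl
  refine ⟨ball x l, ball_mem_nhds x hl',
    (Set.finite_Icc (gridIndex l x - 2) (gridIndex l x + 2)).subset ?_⟩
  rintro a ⟨y, hya, hyx⟩
  have key : ∀ i, gridIndex l x i - 2 ≤ a i ∧ a i ≤ gridIndex l x i + 2 := fun i => by
    have h1 : |y i - x i| < l := by
      rw [← Real.norm_eq_abs]
      exact (PiLp.norm_apply_le (y - x) i).trans_lt (by rw [← dist_eq_norm]; exact hyx)
    rw [abs_lt] at h1
    have h2 := mem_gridCube_gridIndex hl x i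
    have h3 := hya i
    generalize gridIndex l x i = c at *
    constructor
    · have : (c : ℝ) < a i + 3 := lt_of_mul_lt_mul_left (by linarith) hl'.le
      have : c < a i + 3 := by exact_mod_cast this
      omega
    · have : (a i : ℝ) < c + 3 := lt_of_mul_lt_mul_left (by linarith) hl'.le
      have : a i < c + 3 := by exact_mod_cast this
      omega
  exact ⟨fun i => (key i).1, fun i => (key i).2⟩

lemma isClosed_gridUnion {d : ℕ} (l : ℕ) (s : Finset (Fin d → ℤ)) :
    IsClosed (gridUnion l s) :=
  isClosed_biUnion_finset fun a _ => isClosed_gridCube l a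

/-- A boundary point of a union of grid cubes lies in a cube of the union and in a cube outside
of it. -/
lemma exists_of_mem_frontier {d : ℕ} {l : ℕ} (hl : 0 < l) {s : Finset (Fin d → ℤ)} {x : Euc d}
    (hx : x ∈ frontier (gridUnion l s)) :
    (∃ b ∈ s, x ∈ gridCube l b) ∧ ∃ a ∉ s, x ∈ gridCube l a := by
  rw [(isClosed_gridUnion l s).frontier_eq] at hx
  refine ⟨by simpa [gridUnion] using hx.1, ?_⟩
  by_contra! hcon
  -- By local finiteness the union of the remaining cubes is closed, and its complement
  -- is contained in the given union.
  have hV : IsClosed (⋃ a : {a // a ∉ s}, gridCube l a.1) :=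
    ((locallyFinite_gridCube hl).comp_injective Subtype.val_injective).isClosed_iUnion
      fun a => isClosed_gridCube l a.1
  refine hx.2 (mem_interior.2 ⟨_, ?_, hV.isOpen_compl, ?_⟩)
  · intro y hy
    simp only [mem_compl_iff, mem_iUnion, not_exists] at hy
    have h1 : gridIndex l y ∈ s := by
      by_contra h
      exact hy ⟨_, h⟩ (mem_gridCube_gridIndex hl y)
    exact mem_biUnion (by exact h1) (mem_gridCube_gridIndex hl y)
  · simp only [mem_compl_iff, mem_iUnion, not_exists]
    exact fun a => hcon a.1 a.2

lemma adjacent_of_mem {d : ℕ} {l : ℕ} (hl : 0 < l) {a b : Fin d → ℤ} {x : Euc d}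
    (ha : x ∈ gridCube l a) (hb : x ∈ gridCube l b) (i : Fin d) :
    b i - 1 ≤ a i ∧ a i ≤ b i + 1 := by
  have hl' : (0 : ℝ) < l := by exact_mod_cast hl
  have h1 := ha i
  have h2 := hb i
  have h3 : (b i : ℝ) ≤ a i + 1 := le_of_mul_le_mul_left (by linarith) hl'
  have h4 : (a i : ℝ) ≤ b i + 1 := le_of_mul_le_mul_left (by linarith) hl'
  have h3 : b i ≤ a i + 1 := by exact_mod_cast h3
  have h4 : a i ≤ b i + 1 := by exact_mod_cast h4
  omega

/-- Two distinct grid cubes meet only in their boundaries. -/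
lemma mem_gridFacets_of_mem {d : ℕ} {l : ℕ} (hl : 0 < l) {a b : Fin d → ℤ} (hab : a ≠ b)
    {x : Euc d} (ha : x ∈ gridCube l a) (hb : x ∈ gridCube l b) : x ∈ gridFacets l a := by
  obtain ⟨i, hi⟩ := Function.ne_iff.1 hab
  refine ⟨ha, i, ?_⟩
  have h0 := adjacent_of_mem hl ha hb i
  have h1 := ha i
  have h2 := hb i
  have : b i = a i - 1 ∨ b i = a i + 1 := by omega
  rcases this with h | h <;> rw [h] at h2 <;> push_cast at h2
  · left; linarith
  · right; linarith

/-- The boundary of the union over `s` is covered by the boundaries of the collar cubes: at a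
boundary point, the cube outside `s` touches a cube of `s`. -/
lemma frontier_gridUnion_subset {d : ℕ} {l : ℕ} (hl : 0 < l) (s : Finset (Fin d → ℤ)) :
    frontier (gridUnion l s) ⊆ ⋃ a ∈ fatten s \ s, gridFacets l a := by
  intro x hx
  obtain ⟨⟨b, hb, hxb⟩, a, ha, hxa⟩ := exists_of_mem_frontier hl hx
  refine mem_biUnion (x := a) ?_
    (mem_gridFacets_of_mem hl (ne_of_mem_of_not_mem hb ha).symm hxa hxb)
  exact Finset.mem_coe.2 (Finset.mem_sdiff.2
    ⟨mem_fatten.2 ⟨b, hb, adjacent_of_mem hl hxa hxb⟩, ha⟩)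

/-- The boundary of the fattened union is covered by the boundaries of the same collar cubes: a
cube touching the complement of the fattened union does not belong to `s`. -/
lemma frontier_gridUnion_fatten_subset {d : ℕ} {l : ℕ} (hl : 0 < l)
    (s : Finset (Fin d → ℤ)) :
    frontier (gridUnion l (fatten s)) ⊆ ⋃ a ∈ fatten s \ s, gridFacets l a := by
  intro x hx
  obtain ⟨⟨b, hb, hxb⟩, a, ha, hxa⟩ := exists_of_mem_frontier hl hx
  refine mem_biUnion (x := b) ?_
    (mem_gridFacets_of_mem hl (ne_of_mem_of_not_mem hb ha) hxb hxa)
  refine Finset.mem_coe.2 (Finset.mem_sdiff.2 ⟨hb, fun h => ha ?_⟩)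
  exact mem_fatten.2 ⟨b, h, adjacent_of_mem hl hxa hxb⟩

/-! ### Hausdorff measure of the boundary -/

/-- Each of the `2(n+1)` facets is the image of a cube in `ℝ^n` under an insertion of a constant
coordinate, which is Lipschitz from the sup norm to the Euclidean norm; on `ℝ^n` with the sup
norm, `μH[n]` is Lebesgue measure. -/
lemma hausdorffMeasure_gridFacets_le {n : ℕ} {L : ℝ≥0}
    (hL : LipschitzWith L (WithLp.toLp 2 : (Fin (n + 1) → ℝ) → Euc (n + 1)))
    (l : ℕ) (a : Fin (n + 1) → ℤ) :
    μH[n] (gridFacets l a) ≤ (2 * (n + 1) * L ^ n : ℝ≥0) * (l : ℝ≥0∞) ^ n := by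
  let f (i : Fin (n + 1)) (c : ℝ) (y : Fin n → ℝ) : Euc (n + 1) :=
    WithLp.toLp 2 (i.insertNth c y)
  let P (i : Fin (n + 1)) : Set (Fin n → ℝ) :=
    Icc (fun j => (l : ℝ) * a (i.succAbove j)) (fun j => (l : ℝ) * a (i.succAbove j) + l)
  have hf : ∀ i c, LipschitzWith L (f i c) := fun i c => by
    have h1 : LipschitzWith 1 (fun y : Fin n → ℝ => (i.insertNth c y : Fin (n + 1) → ℝ)) := by
      refine LipschitzWith.of_dist_le_mul fun y z => ?_
      rw [Fin.dist_insertNth_insertNth]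
      simp
    have h2 := hL.comp h1
    rwa [mul_one] at h2
  have hface : ∀ i c, μH[n] (f i c '' P i) ≤ (L : ℝ≥0∞) ^ n * (l : ℝ≥0∞) ^ n := fun i c => by
    refine ((hf i c).hausdorffMeasure_image_le n.cast_nonneg (P i)).trans ?_
    have h2 : μH[n] (P i) = (l : ℝ≥0∞) ^ n := by
      have := hausdorffMeasure_pi_real (ι := Fin n)
      rw [Fintype.card_fin] at this
      rw [this, Real.volume_Icc_pi]
      simp
    rw [h2, ENNReal.rpow_natCast]
  have hcov : gridFacets l a ⊆
      ⋃ i, (f i ((l : ℝ) * a i) '' P i ∪ f i ((l : ℝ) * a i + l) '' P i) := by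
    rintro x ⟨hx, i, hi⟩
    refine mem_iUnion.2 ⟨i, ?_⟩
    have hP : i.removeNth (fun j => x j) ∈ P i :=
      ⟨fun j => (hx (i.succAbove j)).1, fun j => (hx (i.succAbove j)).2⟩
    have hfx : f i (x i) (i.removeNth (fun j => x j)) = x := by
      ext j
      simp [f]
    rcases hi with hi | hi
    · exact Or.inl ⟨_, hP, by rw [← hi]; exact hfx⟩
    · exact Or.inr ⟨_, hP, by rw [← hi]; exact hfx⟩
  calc μH[n] (gridFacets l a)
      ≤ ∑ i, μH[n] (f i ((l : ℝ) * a i) '' P i ∪ f i ((l : ℝ) * a i + l) '' P i) :=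
        (measure_mono hcov).trans (measure_iUnion_fintype_le _ _)
    _ ≤ ∑ _i : Fin (n + 1), ((L : ℝ≥0∞) ^ n * l ^ n + (L : ℝ≥0∞) ^ n * l ^ n) :=
        Finset.sum_le_sum fun i _ =>
          (measure_union_le _ _).trans (add_le_add (hface _ _) (hface _ _))
    _ = (2 * (n + 1) * L ^ n : ℝ≥0) * (l : ℝ≥0∞) ^ n := by
        simp only [Finset.sum_const, Finset.card_univ, Fintype.card_fin, nsmul_eq_mul]
        push_cast
        ring

/-- Once the side `l` exceeds `ρ` times the facet constant, a boundary term covered by the cubes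
of `t` is at most the total volume of these cubes. -/
lemma mul_hausdorffMeasure_le {n : ℕ} {L : ℝ≥0}
    (hL : LipschitzWith L (WithLp.toLp 2 : (Fin (n + 1) → ℝ) → Euc (n + 1)))
    {l : ℕ} {ρ : ℝ} (hρ : (2 * (n + 1) * L ^ n : ℝ≥0) * ρ ≤ l)
    {A : Set (Euc (n + 1))} {t : Finset (Fin (n + 1) → ℤ)}
    (hA : A ⊆ ⋃ a ∈ t, gridFacets l a) :
    ENNReal.ofReal ρ * μH[n] A ≤ t.card * (l : ℝ≥0∞) ^ (n + 1) := by
  have h1 : ((2 * (n + 1) * L ^ n : ℝ≥0) : ℝ≥0∞) * ENNReal.ofReal ρ ≤ l := by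
    have := ENNReal.ofReal_le_ofReal hρ
    rwa [ENNReal.ofReal_mul NNReal.zero_le_coe, ENNReal.ofReal_coe_nnreal,
      ENNReal.ofReal_natCast] at this
  calc ENNReal.ofReal ρ * μH[n] A
      ≤ ENNReal.ofReal ρ * (t.card * ((2 * (n + 1) * L ^ n : ℝ≥0) * (l : ℝ≥0∞) ^ n)) := by
        gcongr
        refine (measure_mono hA).trans ((measure_biUnion_finset_le t _).trans ?_)
        refine (Finset.sum_le_sum fun a _ => hausdorffMeasure_gridFacets_le hL l a).trans ?_
        simp
    _ = t.card * ((((2 * (n + 1) * L ^ n : ℝ≥0) : ℝ≥0∞) * ENNReal.ofReal ρ) * l ^ n) := by ring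
    _ ≤ t.card * (l * (l : ℝ≥0∞) ^ n) := by gcongr
    _ = t.card * (l : ℝ≥0∞) ^ (n + 1) := by rw [pow_succ']

/-! ### Grid approximation of a bounded set -/

lemma finite_gridIndex_image {d : ℕ} (l : ℕ) {B : Set (Euc d)} (hB : IsBounded B) :
    (gridIndex l '' B).Finite := by
  obtain ⟨R, hR⟩ := hB.exists_norm_le
  refine (Set.finite_Icc (fun _ => ⌊-R / l⌋) (fun _ => ⌊R / l⌋)).subset ?_
  rintro _ ⟨x, hx, rfl⟩
  have h : ∀ i, |x i| ≤ R := fun i => (PiLp.norm_apply_le x i).trans (hR x hx)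
  constructor <;> intro i <;> have := abs_le.1 (h i) <;>
    simp only [gridIndex] <;> gcongr <;> linarith

/-- If the cubes of `s` all meet `B`, every point `x` of the fattened union is within `2 l` of `B` in
each coordinate; `L` converts this to Euclidean distance. -/
lemma gridUnion_fatten_subset {d : ℕ} {L : ℝ≥0} {l : ℕ}
    (hL : LipschitzWith L (WithLp.toLp 2 : (Fin d → ℝ) → Euc d))
    {B : Set (Euc d)} {s : Finset (Fin d → ℤ)} (hs : ∀ b ∈ s, ∃ y ∈ B, y ∈ gridCube l b) :
    gridUnion l (fatten s) ⊆ cthickening ((L + 1) * (2 * l)) B := by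
  intro x hx
  obtain ⟨a, ha, hxa⟩ : ∃ a ∈ fatten s, x ∈ gridCube l a := by simpa [gridUnion] using hx
  obtain ⟨b, hb, hab⟩ := mem_fatten.1 ha
  obtain ⟨y, hy, hyb⟩ := hs b hb
  refine mem_cthickening_of_dist_le x y _ B hy ?_
  have hl : (0 : ℝ) ≤ l := l.cast_nonneg
  have h1 : dist x.ofLp y.ofLp ≤ 2 * l := by
    refine (dist_pi_le_iff (by positivity)).2 fun i => ?_
    have h2 : (b i : ℝ) - 1 ≤ a i := by exact_mod_cast (hab i).1
    have h3 : (a i : ℝ) ≤ b i + 1 := by exact_mod_cast (hab i).2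
    have h4 := mul_le_mul_of_nonneg_left h2 hl
    have h5 := mul_le_mul_of_nonneg_left h3 hl
    have h6 := hxa i
    have h7 := hyb i
    rw [Real.dist_eq, abs_le]
    constructor <;> linarith
  calc dist x y ≤ L * dist x.ofLp y.ofLp := hL.dist_le_mul x.ofLp y.ofLp
    _ ≤ (L + 1) * (2 * l) := by
      gcongr
      linarith

/-- **Laczkovich's lemma.** There is a constant `C > 0` depending only on
`d` such that: if `ν` is a locally finite nonnegative Borel measure on `ℝ^d`, `ρ ≥ 1`, and
`|ν(U) − m_d(U)| ≤ ρ·H^{d−1}(∂U)` for every finite union `U` of unit lattice cubes, then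
`D(ν) ≤ C·ρ`. -/
theorem stmt_7 (d : ℕ) (hd : 1 ≤ d) :
    ∃ C : ℝ, 0 < C ∧
      ∀ ν : Measure (Euc d), IsLocallyFiniteMeasure ν →
        ∀ ρ : ℝ, 1 ≤ ρ →
          (∀ U : Set (Euc d), IsFiniteUnionUnitCubes U →
            ν U ≤ volume U + ENNReal.ofReal ρ * μH[(d : ℝ) - 1] (frontier U) ∧
            volume U ≤ ν U + ENNReal.ofReal ρ * μH[(d : ℝ) - 1] (frontier U)) →
          Di ν volume ≤ ENNReal.ofReal (C * ρ) := by
  obtain ⟨n, rfl⟩ : ∃ n, d = n + 1 := ⟨d - 1, by omega⟩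
  obtain ⟨L, hL⟩ :
      ∃ L : ℝ≥0, LipschitzWith L (WithLp.toLp 2 : (Fin (n + 1) → ℝ) → Euc (n + 1)) :=
    ⟨_, PiLp.lipschitzWith_toLp 2 _⟩
  set K : ℝ≥0 := 2 * (n + 1) * L ^ n with hK
  refine ⟨(L + 1) * (2 * (K + 1)), by positivity, fun ν _ ρ hρ h => ?_⟩
  have hdim : ((n + 1 : ℕ) : ℝ) - 1 = n := by push_cast; ring
  rw [hdim] at h
  -- Adding one keeps the side positive when `K = 0`, and at most `(K + 1) ρ` as `1 ≤ ρ`.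
  set l : ℕ := ⌊K * ρ⌋₊ + 1 with hl_def
  have hl : 0 < l := Nat.succ_pos _
  have hl' : (0 : ℝ) < l := by exact_mod_cast hl
  have hlow : K * ρ ≤ l := by
    rw [hl_def]; push_cast; exact (Nat.lt_floor_add_one _).le
  have hup : (l : ℝ) ≤ (K + 1) * ρ := by
    have := Nat.floor_le (a := K * ρ) (by positivity)
    rw [hl_def]; push_cast; linarith
  have hr : 0 < ((L : ℝ) + 1) * (2 * l) := by positivity
  have hle : ((L : ℝ) + 1) * (2 * l) ≤ (L + 1) * (2 * (K + 1)) * ρ := by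
    have := mul_le_mul_of_nonneg_left hup (by positivity : (0 : ℝ) ≤ (L + 1) * 2)
    linarith
  refine (sInf_le (mem_image_of_mem _ (Set.mem_ofPred_eq ▸ ⟨hr, fun B hB _ => ?_⟩))).trans
    (ENNReal.ofReal_le_ofReal hle)
  set s : Finset (Fin (n + 1) → ℤ) := (finite_gridIndex_image l hB).toFinset with hs_def
  have hBs : B ⊆ gridUnion l s := fun x hx =>
    mem_biUnion (x := gridIndex l x)
      (Finset.mem_coe.2 (by rw [hs_def, Set.Finite.mem_toFinset]; exact mem_image_of_mem _ hx))
      (mem_gridCube_gridIndex hl x)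
  have hsB : gridUnion l (fatten s) ⊆ cthickening ((L + 1) * (2 * l)) B := by
    refine gridUnion_fatten_subset hL fun b hb => ?_
    rw [hs_def, Set.Finite.mem_toFinset] at hb
    obtain ⟨y, hy, rfl⟩ := hb
    exact ⟨y, hy, mem_gridCube_gridIndex hl y⟩
  have hcard : ((fatten s \ s).card : ℝ≥0∞) * l ^ (n + 1) + s.card * l ^ (n + 1) =
      (fatten s).card * (l : ℝ≥0∞) ^ (n + 1) := by
    rw [← add_mul, ← Finset.card_sdiff_add_card_eq_card (subset_fatten s)]
    push_cast
    ring
  constructor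
  · calc ν B ≤ ν (gridUnion l s) := measure_mono hBs
      _ ≤ volume (gridUnion l s) + ENNReal.ofReal ρ * μH[n] (frontier (gridUnion l s)) :=
        (h _ (isFiniteUnionUnitCubes_gridUnion hl s)).1
      _ ≤ s.card * (l : ℝ≥0∞) ^ (n + 1) + (fatten s \ s).card * (l : ℝ≥0∞) ^ (n + 1) :=
        add_le_add (volume_gridUnion_le l s)
          (mul_hausdorffMeasure_le hL hlow (frontier_gridUnion_subset hl s))
      _ = (fatten s).card * (l : ℝ≥0∞) ^ (n + 1) := by rw [add_comm, hcard]
      _ ≤ volume (gridUnion l (fatten s)) := le_volume_gridUnion hl _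
      _ ≤ volume (cthickening ((L + 1) * (2 * l)) B) := measure_mono hsB
  · have h1 : ((fatten s \ s).card : ℝ≥0∞) * l ^ (n + 1) + s.card * l ^ (n + 1) ≤
        (fatten s \ s).card * (l : ℝ≥0∞) ^ (n + 1) + ν (gridUnion l (fatten s)) := by
      rw [hcard, add_comm _ (ν _)]
      refine (le_volume_gridUnion hl _).trans
        (((h _ (isFiniteUnionUnitCubes_gridUnion hl (fatten s))).2).trans ?_)
      exact add_le_add le_rfl
        (mul_hausdorffMeasure_le hL hlow (frontier_gridUnion_fatten_subset hl s))
    have hfin : ((fatten s \ s).card : ℝ≥0∞) * (l : ℝ≥0∞) ^ (n + 1) ≠ ∞ := by finiteness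
    calc volume B ≤ volume (gridUnion l s) := measure_mono hBs
      _ ≤ s.card * (l : ℝ≥0∞) ^ (n + 1) := volume_gridUnion_le l s
      _ ≤ ν (gridUnion l (fatten s)) := (ENNReal.add_le_add_iff_left hfin).1 h1
      _ ≤ ν (cthickening ((L + 1) * (2 * l)) B) := measure_mono hsB
end
end

section
/- There is a constant C > 0 depending only on the dimension d such that for every r > 0 and all points x, y ∈ ℝ^d with |x − y| ≤ r, there exists an integrable vector field w : ℝ^d → ℝ^d that vanishes outside the closed ball of radius r centered at (x+y)/2, satisfies ∫_{ℝ^d} |w| dm_d ≤ C·r, and satisfies div w = δ_x − δ_y weakly, i.e. ∫ ⟨w(ξ), ∇φ(ξ)⟩ dm_d(ξ) = φ(y) − φ(x) for every smooth compactly supported φ : ℝ^d → ℝ. -/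
/-!
For a point `x` of the ball `B = closedBall c r`, let `u` be the field obtained by transporting
mass from `x` to the uniform distribution on `B` along straight segments. Its weak divergence is
`δ_x` minus the uniform probability on `B`, it lives on `B` because `B` is convex, and its `L¹`
norm is at most the average length of the segments, hence at most `2r`. Taking `c` to be the
midpoint of `x` and `y` and subtracting the field built from `y` from the field built from `x`
cancels the uniform distributions, so that `C = 4` works.

With the origin at `x`, the field is `u(ξ) = ∫₀¹ t⁻ᵈ g(t⁻¹ξ) dt`, where `g(v) = v / |B|` on the
shifted ball and `0` elsewhere. `exists_radial_field` constructs it for any integrable `g`: since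
every rescaling `t⁻ᵈ g(t⁻¹ ·)` has the same `L¹` norm as `g`, Fubini applies, and substituting
`ξ = t v` gives `∫ ⟨u, F⟩ = ∫ ∫₀¹ ⟨g v, F (t v)⟩ dt dv`. For `F = ∇φ` the inner integral is
evaluated by the fundamental theorem of calculus on the segment.
-/

open MeasureTheory Metric Set Bornology
open scoped ENNReal RealInnerProductSpace

noncomputable section

/-- The superposition `u` over `t ∈ (0, 1]` of the rescalings `t⁻ᵈ g(t⁻¹ ·)` of `g`: its `L¹` norm
is controlled by that of `g`, and testing against `F` amounts to testing `g v` against `F` on the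
segment from `0` to `v`. -/
lemma exists_radial_field {d : ℕ} (g : Euc d → Euc d) (hgm : StronglyMeasurable g)
    (hg : Integrable g volume) :
    ∃ u : Euc d → Euc d, Integrable u volume ∧
      (∀ ξ, (∀ t ∈ Ioc (0 : ℝ) 1, g (t⁻¹ • ξ) = 0) → u ξ = 0) ∧
      (∫ ξ, ‖u ξ‖) ≤ ∫ ξ, ‖g ξ‖ ∧
      ∀ F : Euc d → Euc d, Continuous F → ∀ M : ℝ, (∀ ξ, ‖F ξ‖ ≤ M) →
        ∫ ξ, ⟪u ξ, F ξ⟫ = ∫ v, ∫ t in Ioc (0 : ℝ) 1, ⟪g v, F (t • v)⟫ := by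
  set ν : Measure ℝ := volume.restrict (Ioc (0 : ℝ) 1) with hν
  have hνt : ∀ᵐ t ∂ν, t ∈ Ioc (0 : ℝ) 1 := ae_restrict_mem measurableSet_Ioc
  have hνfin : IsFiniteMeasure ν := ⟨by simp [hν]⟩
  have hν1 : ν.real univ = 1 := by simp [hν, Measure.real]
  let G : ℝ → Euc d → Euc d := fun t ξ => (t ^ d)⁻¹ • g (t⁻¹ • ξ)
  have hscale : ∀ t ∈ Ioc (0 : ℝ) 1, ∀ h : Euc d → ℝ,
      ∫ ξ, (t ^ d)⁻¹ * h (t⁻¹ • ξ) = ∫ v, h v := by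
    intro t ht h
    have htd : 0 < t ^ d := pow_pos ht.1 d
    rw [integral_const_mul, Measure.integral_comp_inv_smul]
    simp only [finrank_euclideanSpace, Fintype.card_fin, abs_of_pos htd, smul_eq_mul]
    rw [inv_mul_cancel_left₀ htd.ne']
  have hGn : ∀ t ∈ Ioc (0 : ℝ) 1, ∫ ξ, ‖G t ξ‖ = ∫ v, ‖g v‖ := by
    intro t ht
    rw [← hscale t ht fun v => ‖g v‖]
    refine integral_congr_ae (Filter.Eventually.of_forall fun ξ => ?_)
    have htd : 0 < t ^ d := pow_pos ht.1 d
    simp only [G, norm_smul, norm_inv, Real.norm_eq_abs, abs_of_pos htd]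
  have hGm : StronglyMeasurable (Function.uncurry G) := by
    have h1 : Measurable fun p : ℝ × Euc d => (p.1 ^ d)⁻¹ := by fun_prop
    have h2 : Measurable fun p : ℝ × Euc d => p.1⁻¹ • p.2 := by fun_prop
    exact h1.stronglyMeasurable.smul (hgm.comp_measurable h2)
  have hGi : Integrable (Function.uncurry G) (ν.prod volume) := by
    rw [integrable_prod_iff hGm.aestronglyMeasurable]
    constructor
    · filter_upwards [hνt] with t ht
      exact ((integrable_comp_smul_iff volume g (inv_ne_zero ht.1.ne')).2 hg).smul ((t ^ d)⁻¹)
    · refine (integrable_const (∫ v, ‖g v‖)).congr ?_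
      filter_upwards [hνt] with t ht
      exact (hGn t ht).symm
  have hu : Integrable (fun ξ => ∫ t, G t ξ ∂ν) volume := hGi.integral_prod_right
  refine ⟨fun ξ => ∫ t, G t ξ ∂ν, hu, ?_, ?_, ?_⟩
  · intro ξ h
    refine integral_eq_zero_of_ae ?_
    filter_upwards [hνt] with t ht
    simp [G, h t ht]
  · calc ∫ ξ, ‖∫ t, G t ξ ∂ν‖ ≤ ∫ ξ, ∫ t, ‖G t ξ‖ ∂ν :=
          integral_mono hu.norm hGi.norm.integral_prod_right
            fun ξ => norm_integral_le_integral_norm _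
      _ = ∫ t, (∫ ξ, ‖G t ξ‖) ∂ν :=
          (integral_integral_swap (f := fun t ξ => ‖G t ξ‖) hGi.norm).symm
      _ = ∫ t, (∫ v, ‖g v‖) ∂ν := by
          refine integral_congr_ae ?_
          filter_upwards [hνt] with t ht using hGn t ht
      _ = ∫ v, ‖g v‖ := by simp [hν1]
  · intro F hF M hM
    have hI1 : Integrable (Function.uncurry fun t ξ => ⟪G t ξ, F ξ⟫) (ν.prod volume) := by
      refine (hGi.norm.mul_const M).mono' ?_ (Filter.Eventually.of_forall fun p => ?_)
      · exact hGm.aestronglyMeasurable.inner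
          (hF.comp continuous_snd).aestronglyMeasurable
      · exact (norm_inner_le_norm _ _).trans
          (mul_le_mul_of_nonneg_left (hM _) (norm_nonneg _))
    have hI2 : Integrable (Function.uncurry fun t v => ⟪g v, F (t • v)⟫) (ν.prod volume) := by
      refine ((hg.comp_snd ν).norm.mul_const M).mono' ?_ (Filter.Eventually.of_forall fun p => ?_)
      · exact (hgm.comp_measurable measurable_snd).aestronglyMeasurable.inner
          (hF.comp (continuous_fst.smul continuous_snd)).aestronglyMeasurable
      · exact (norm_inner_le_norm _ _).trans
          (mul_le_mul_of_nonneg_left (hM _) (norm_nonneg _))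
    calc ∫ ξ, ⟪∫ t, G t ξ ∂ν, F ξ⟫ = ∫ ξ, ∫ t, ⟪G t ξ, F ξ⟫ ∂ν := by
          refine integral_congr_ae ?_
          filter_upwards [hGi.prod_left_ae] with ξ hξ
          have h := integral_inner (𝕜 := ℝ) hξ (F ξ)
          simp only [Function.uncurry_apply_pair] at h
          simpa only [real_inner_comm (F ξ)] using h.symm
      _ = ∫ t, (∫ ξ, ⟪G t ξ, F ξ⟫) ∂ν := (integral_integral_swap hI1).symm
      _ = ∫ t, (∫ v, ⟪g v, F (t • v)⟫) ∂ν := by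
          refine integral_congr_ae ?_
          filter_upwards [hνt] with t ht
          rw [← hscale t ht fun v => ⟪g v, F (t • v)⟫]
          refine integral_congr_ae (Filter.Eventually.of_forall fun ξ => ?_)
          simp only [G, real_inner_smul_left, smul_inv_smul₀ ht.1.ne']
      _ = ∫ v, ∫ t, ⟪g v, F (t • v)⟫ ∂ν := integral_integral_swap hI2

lemma integral_inner_gradient_segment {d : ℕ} {φ : Euc d → ℝ} (hφ : ContDiff ℝ (⊤ : ℕ∞) φ)
    (x v : Euc d) :
    ∫ t in Ioc (0 : ℝ) 1, ⟪v, gradient φ (x + t • v)⟫ = φ (x + v) - φ x := by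
  have hd : Differentiable ℝ φ := hφ.differentiable (by simp)
  have hin : ∀ t : ℝ, ⟪v, gradient φ (x + t • v)⟫ = fderiv ℝ φ (x + t • v) v := fun t => by
    rw [real_inner_comm, gradient, InnerProductSpace.toDual_symm_apply]
  have hder : ∀ t : ℝ, HasDerivAt (fun s : ℝ => φ (x + s • v)) (fderiv ℝ φ (x + t • v) v) t := by
    intro t
    have h1 : HasDerivAt (fun s : ℝ => x + s • v) v t := by
      simpa using ((hasDerivAt_id t).smul_const v).const_add x
    exact (hd (x + t • v)).hasFDerivAt.comp_hasDerivAt t h1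
  have hc : Continuous fun t : ℝ => fderiv ℝ φ (x + t • v) v :=
    ((hφ.continuous_fderiv (by simp)).comp (by fun_prop)).clm_apply continuous_const
  simp only [hin]
  rw [← intervalIntegral.integral_of_le zero_le_one,
    intervalIntegral.integral_eq_sub_of_hasDerivAt (fun t _ => hder t)
      (hc.intervalIntegrable 0 1)]
  simp

/-- A field on the ball `closedBall c r` whose weak divergence is `δ_x` minus the uniform
probability measure on the ball. -/
lemma exists_field_to_ball {d : ℕ} (c x : Euc d) {r : ℝ} (hr : 0 < r)
    (hx : x ∈ closedBall c r) :
    ∃ u : Euc d → Euc d, Integrable u volume ∧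
      (∀ ξ, ξ ∉ closedBall c r → u ξ = 0) ∧ (∫ ξ, ‖u ξ‖) ≤ 2 * r ∧
      ∀ φ : Euc d → ℝ, ContDiff ℝ (⊤ : ℕ∞) φ → HasCompactSupport φ →
        ∫ ξ, ⟪u ξ, gradient φ ξ⟫ =
          (volume.real (closedBall c r))⁻¹ * (∫ ξ in closedBall c r, φ ξ) - φ x := by
  set B := closedBall c r with hB
  set V := volume.real B with hV
  have hVpos : 0 < V :=
    ENNReal.toReal_pos (measure_closedBall_pos _ _ hr).ne' measure_closedBall_lt_top.ne
  have hBm : MeasurableSet B := measurableSet_closedBall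
  -- `h` is the displacement field in the original coordinates; `g` has `x` moved to the origin.
  let h : Euc d → Euc d := B.indicator fun z => V⁻¹ • (z - x)
  let g : Euc d → Euc d := fun v => h (x + v)
  have hc : Continuous fun z : Euc d => V⁻¹ • (z - x) := by fun_prop
  have hhm : StronglyMeasurable h := hc.stronglyMeasurable.indicator hBm
  have hhi : Integrable h volume :=
    (integrable_indicator_iff hBm).2 (hc.continuousOn.integrableOn_compact
      (isCompact_closedBall c r))
  have hgm : StronglyMeasurable g := hhm.comp_measurable (by fun_prop)
  have hgi : Integrable g volume := hhi.comp_add_left x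
  obtain ⟨u, hui, hu0, hun, huF⟩ := exists_radial_field g hgm hgi
  refine ⟨fun ξ => u (ξ - x), hui.comp_sub_right x, ?_, ?_, ?_⟩
  · intro ξ hξ
    refine hu0 _ fun t ht => ?_
    refine indicator_of_notMem (fun hz => hξ ?_) _
    -- `ξ` lies on the segment from `x` to the point `x + t⁻¹ (ξ - x)` of the ball.
    have := (convex_closedBall c r).add_smul_sub_mem hx hz ⟨ht.1.le, ht.2⟩
    simpa only [add_sub_cancel_left, smul_inv_smul₀ ht.1.ne', add_sub_cancel] using this
  · have hn : ∀ z, ‖h z‖ ≤ B.indicator (fun _ => V⁻¹ * (2 * r)) z := by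
      intro z
      by_cases hz : z ∈ B
      · simp only [h, indicator_of_mem hz, norm_smul, norm_inv, Real.norm_eq_abs,
          abs_of_pos hVpos]
        gcongr
        rw [← dist_eq_norm]
        have h1 : dist z c ≤ r := hz
        have h2 : dist x c ≤ r := hx
        linarith [dist_triangle_right z x c]
      · simp [h, indicator_of_notMem hz]
    calc ∫ ξ, ‖u (ξ - x)‖ = ∫ ξ, ‖u ξ‖ := integral_sub_right_eq_self (fun ξ => ‖u ξ‖) x
      _ ≤ ∫ v, ‖g v‖ := hun
      _ = ∫ z, ‖h z‖ := integral_add_left_eq_self (fun z => ‖h z‖) x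
      _ ≤ ∫ z, B.indicator (fun _ => V⁻¹ * (2 * r)) z :=
          integral_mono hhi.norm ((integrable_indicator_iff hBm).2
            (integrableOn_const measure_closedBall_lt_top.ne)) hn
      _ = 2 * r := by
          rw [integral_indicator_const _ hBm, smul_eq_mul, ← hV, mul_inv_cancel_left₀ hVpos.ne']
  · intro φ hφ hφc
    have hgc : Continuous (gradient φ) :=
      (InnerProductSpace.toDual ℝ (Euc d)).symm.continuous.comp
        (hφ.continuous_fderiv (by simp))
    have hgs : HasCompactSupport (gradient φ) :=
      (hφc.fderiv ℝ).comp_left (g := (InnerProductSpace.toDual ℝ (Euc d)).symm) (map_zero _)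
    obtain ⟨M, hM⟩ := hgs.exists_bound_of_continuous hgc
    have hφB : IntegrableOn φ B := hφ.continuous.continuousOn.integrableOn_compact
      (isCompact_closedBall c r)
    have key := huF (fun v => gradient φ (x + v)) (by fun_prop) M (fun v => hM _)
    have hinner : ∀ v, ∫ t in Ioc (0 : ℝ) 1, ⟪g v, gradient φ (x + t • v)⟫ =
        B.indicator (fun z => V⁻¹ * (φ z - φ x)) (x + v) := by
      intro v
      by_cases hz : x + v ∈ B
      · simp only [g, h, indicator_of_mem hz, add_sub_cancel_left, real_inner_smul_left]
        rw [integral_const_mul, integral_inner_gradient_segment hφ]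
      · simp [g, h, indicator_of_notMem hz]
    calc ∫ ξ, ⟪u (ξ - x), gradient φ ξ⟫ = ∫ ξ, ⟪u ξ, gradient φ (x + ξ)⟫ := by
          rw [← integral_sub_right_eq_self (fun ξ => ⟪u ξ, gradient φ (x + ξ)⟫) x]
          simp only [add_sub_cancel]
      _ = ∫ v, B.indicator (fun z => V⁻¹ * (φ z - φ x)) (x + v) := by
          rw [key]; exact integral_congr_ae (Filter.Eventually.of_forall hinner)
      _ = ∫ z, B.indicator (fun z => V⁻¹ * (φ z - φ x)) z := integral_add_left_eq_self _ x
      _ = V⁻¹ * (∫ ξ in B, φ ξ) - φ x := by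
          rw [integral_indicator hBm, integral_const_mul, integral_sub hφB
            (integrableOn_const measure_closedBall_lt_top.ne), setIntegral_const, smul_eq_mul,
            ← hV, mul_sub, inv_mul_cancel_left₀ hVpos.ne']

/-- There is a constant `C > 0` depending only on `d` such that for every
`r > 0` and all `x, y ∈ ℝ^d` with `|x − y| ≤ r`, there is an integrable vector field `w`
vanishing outside the closed ball of radius `r` centered at `(x+y)/2`, with
`∫ |w| dm_d ≤ C·r` and `div w = δ_x − δ_y` weakly. -/
theorem stmt_10 (d : ℕ) (hd : 1 ≤ d) :
    ∃ C : ℝ, 0 < C ∧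
      ∀ r : ℝ, 0 < r → ∀ x y : Euc d, dist x y ≤ r →
        ∃ w : Euc d → Euc d, Integrable w volume ∧
          (∀ ξ : Euc d, ξ ∉ closedBall (midpoint ℝ x y) r → w ξ = 0) ∧
          (∫ ξ, ‖w ξ‖ ∂volume) ≤ C * r ∧
          ∀ φ : Euc d → ℝ, ContDiff ℝ (⊤ : ℕ∞) φ → HasCompactSupport φ →
            ∫ ξ, ⟪w ξ, gradient φ ξ⟫ ∂volume = φ y - φ x := by
  refine ⟨4, by norm_num, fun r hr x y hxy => ?_⟩
  have hx : x ∈ closedBall (midpoint ℝ x y) r := by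
    rw [mem_closedBall, dist_left_midpoint, Real.norm_of_nonneg zero_le_two]
    linarith
  have hy : y ∈ closedBall (midpoint ℝ x y) r := by
    rw [mem_closedBall, dist_right_midpoint, Real.norm_of_nonneg zero_le_two]
    linarith
  obtain ⟨u, hui, hu0, hun, hu⟩ := exists_field_to_ball _ x hr hx
  obtain ⟨v, hvi, hv0, hvn, hv⟩ := exists_field_to_ball _ y hr hy
  refine ⟨fun ξ => u ξ - v ξ, hui.sub hvi, fun ξ hξ => by simp [hu0 ξ hξ, hv0 ξ hξ], ?_, ?_⟩
  · calc ∫ ξ, ‖u ξ - v ξ‖ ≤ ∫ ξ, (‖u ξ‖ + ‖v ξ‖) :=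
          integral_mono (hui.sub hvi).norm (hui.norm.add hvi.norm) fun ξ => norm_sub_le _ _
      _ = (∫ ξ, ‖u ξ‖) + ∫ ξ, ‖v ξ‖ := integral_add hui.norm hvi.norm
      _ ≤ 4 * r := by linarith
  · intro φ hφ hφc
    have hgc : Continuous (gradient φ) :=
      (InnerProductSpace.toDual ℝ (Euc d)).symm.continuous.comp
        (hφ.continuous_fderiv (by simp))
    have hgs : HasCompactSupport (gradient φ) :=
      (hφc.fderiv ℝ).comp_left (g := (InnerProductSpace.toDual ℝ (Euc d)).symm) (map_zero _)
    obtain ⟨M, hM⟩ := hgs.exists_bound_of_continuous hgc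
    have hint : ∀ f : Euc d → Euc d, Integrable f volume →
        Integrable (fun ξ => ⟪f ξ, gradient φ ξ⟫) volume := fun f hf =>
      (hf.norm.mul_const M).mono' (hf.aestronglyMeasurable.inner hgc.aestronglyMeasurable)
        (Filter.Eventually.of_forall fun ξ => (norm_inner_le_norm _ _).trans
          (mul_le_mul_of_nonneg_left (hM _) (norm_nonneg _)))
    simp only [inner_sub_left]
    rw [integral_sub (hint u hui) (hint v hvi), hu φ hφ hφc, hv φ hφ hφc]
    ring
end
end

section
/- Let F ⊂ ℝ^d × ℝ^d be a closed symmetric set such that F ∩ (ℝ^d × B) is bounded whenever B ⊂ ℝ^d is bounded. Let ν₁, ν₂ be locally finite nonnegative Borel measures on ℝ^d such that ν₁(C) ≤ ν₂(C_{+F}) and ν₂(C) ≤ ν₁(C_{+F}) for every compact set C ⊂ ℝ^d. If f, g : ℝ^d → ℝ are continuous compactly supported functions with f(x) ≥ g(y) for all (x,y) ∈ F, then ∫ g dν₂ ≤ ∫ f dν₁. -/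
/-!
The inequality is proved separately for positive and negative parts, level set by level set.
For `t > 0` the set `{g ≥ t}` is compact and `{g ≥ t}_{+F} ⊆ {f ≥ t}`, so
`ν₂ {g ≥ t} ≤ ν₁ {f ≥ t}`; the layer cake formula turns this into `∫ g⁺ dν₂ ≤ ∫ f⁺ dν₁`
(`lintegral_ofReal_le_of_plusF`). By symmetry of `F`, the same argument applied to `-f` and `-g`
with the measures exchanged gives `∫ f⁻ dν₁ ≤ ∫ g⁻ dν₂`. The two inequalities are then subtracted.
-/

open MeasureTheory Metric Set Bornology
open scoped ENNReal RealInnerProductSpace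

noncomputable section

/-- Domination of superlevel sets along `F` integrates to domination of positive parts. -/
theorem lintegral_ofReal_le_of_plusF {d : ℕ} {F : Set (Euc d × Euc d)} {μ ν : Measure (Euc d)}
    (hμν : ∀ C : Set (Euc d), IsCompact C → ν C ≤ μ (plusF F C))
    {f g : Euc d → ℝ} (hf : Continuous f) (hg : Continuous g) (hgc : HasCompactSupport g)
    (hfg : ∀ p ∈ F, g p.2 ≤ f p.1) :
    ∫⁻ y, ENNReal.ofReal (g y) ∂ν ≤ ∫⁻ x, ENNReal.ofReal (f x) ∂μ := by
  -- The layer cake formula needs nonnegative functions, so pass to `max · 0`.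
  have key : ∀ (h : Euc d → ℝ) (κ : Measure (Euc d)), Continuous h →
      ∫⁻ x, ENNReal.ofReal (h x) ∂κ = ∫⁻ t in Ioi (0 : ℝ), κ {x | t ≤ max (h x) 0} := by
    intro h κ hh
    rw [← lintegral_eq_lintegral_meas_le κ (f := fun x => max (h x) 0)
      (Filter.Eventually.of_forall fun x => le_max_right _ _)
      (hh.max continuous_const).measurable.aemeasurable]
    simp [ENNReal.ofReal_max]
  rw [key g ν hg, key f μ hf]
  refine setLIntegral_mono' measurableSet_Ioi fun t (ht : 0 < t) => ?_
  have hC : IsCompact {y | t ≤ max (g y) 0} := by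
    refine hgc.isCompact.of_isClosed_subset
      (isClosed_le continuous_const (hg.max continuous_const)) fun y (hy : t ≤ max (g y) 0) =>
        subset_tsupport g fun h0 => ?_
    rw [h0, max_self] at hy
    exact absurd hy ht.not_ge
  refine (hμν _ hC).trans (measure_mono ?_)
  rintro x ⟨y, hy, hxy⟩
  exact le_trans (show t ≤ max (g y) 0 from hy) (max_le_max_right 0 (hfg _ hxy))

/-- Let `F ⊆ ℝ^d × ℝ^d` be a closed symmetric set such that
`F ∩ (ℝ^d × B)` is bounded whenever `B` is bounded, and let `ν₁, ν₂` be locally finite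
nonnegative Borel measures with `ν₁ C ≤ ν₂ (C_{+F})` and `ν₂ C ≤ ν₁ (C_{+F})` for every
compact `C`. If `f, g` are continuous compactly supported with `f(x) ≥ g(y)` for all
`(x,y) ∈ F`, then `∫ g dν₂ ≤ ∫ f dν₁`. -/
theorem stmt_11 (d : ℕ) (hd : 1 ≤ d) (F : Set (Euc d × Euc d))
    (hFclosed : IsClosed F) (hFsym : ∀ x y : Euc d, (x, y) ∈ F → (y, x) ∈ F)
    (hFbdd : ∀ B : Set (Euc d), IsBounded B → IsBounded (F ∩ univ ×ˢ B))
    (ν₁ ν₂ : Measure (Euc d)) [IsLocallyFiniteMeasure ν₁] [IsLocallyFiniteMeasure ν₂]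
    (hDi : ∀ C : Set (Euc d), IsCompact C → ν₁ C ≤ ν₂ (plusF F C) ∧ ν₂ C ≤ ν₁ (plusF F C))
    (f g : Euc d → ℝ) (hf : Continuous f) (hfc : HasCompactSupport f)
    (hg : Continuous g) (hgc : HasCompactSupport g)
    (hfg : ∀ p ∈ F, g p.2 ≤ f p.1) :
    ∫ y, g y ∂ν₂ ≤ ∫ x, f x ∂ν₁ := by
  have hfi : Integrable f ν₁ := hf.integrable_of_hasCompactSupport hfc
  have hgi : Integrable g ν₂ := hg.integrable_of_hasCompactSupport hgc
  have hpos := lintegral_ofReal_le_of_plusF (fun C hC => (hDi C hC).2) hf hg hgc hfg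
  have hneg := lintegral_ofReal_le_of_plusF (f := fun y => -g y) (g := fun x => -f x)
    (fun C hC => (hDi C hC).1) hg.neg hf.neg hfc.neg
    (fun p hp => neg_le_neg (hfg (p.2, p.1) (hFsym _ _ hp)))
  rw [integral_eq_lintegral_pos_part_sub_lintegral_neg_part hfi,
    integral_eq_lintegral_pos_part_sub_lintegral_neg_part hgi]
  exact sub_le_sub (ENNReal.toReal_mono hfi.lintegral_lt_top.ne hpos)
    (ENNReal.toReal_mono hgi.neg.lintegral_lt_top.ne hneg)
end
end

section
/- Let ν be a locally finite nonnegative Borel measure on ℝ^d, let v : ℝ^d → ℝ^d be a locally integrable vector field connecting ν and m_d, and let r > 0. Let ν * χ_r denote the measure with density x ↦ ∫ χ_r(x − y) dν(y) with respect to m_d. Then for every set U ⊂ ℝ^d that is a finite union of unit lattice cubes (cubes ∏_{i=1}^d [a_i, a_i + 1] with a_i ∈ ℤ), one has |(ν * χ_r)(U) − m_d(U)| ≤ ‖v * χ_r‖_∞ · H^{d−1}(∂U), where H^{d−1} is the (d−1)-dimensional Hausdorff measure and ∂U is the topological boundary of U. -/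
/-!
Testing the equation `div v = ν - m_d` against `ψ * χ_r` and moving the even kernel `χ_r` onto `v`
and `ν` by Fubini gives, for every smooth compactly supported `ψ ≥ 0`,
`|∫ ψ d(ν * χ_r) - ∫ ψ dm_d| ≤ ‖v * χ_r‖_∞ ∫ |∇ψ|` (`smoothed_test`). This is applied to
mollifications `ψ` of the indicator of `U`. They converge to the indicator off `∂U`, which is
Lebesgue null and hence null for `ν * χ_r` (`tendsto_lintegral_mollInd`), so what remains is the
perimeter bound `∫ |∇ψ| ≤ H^{d-1}(∂U)` (`lintegral_fderiv_mollInd_le`).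

For the perimeter bound, `|∇ψ| ≤ ∑ i, |∂_i ψ|` loses nothing essential because the faces of `U` are
axis parallel. By Fatou and Young, `∫ |∂_i ψ|` is at most the limit of `h⁻¹ m_d(U ∆ (U - h e_i))`.
If exactly one of `x`, `x + h e_i` lies in `U`, the segment between them meets `∂U`, and for almost
every `x` it does so at a point whose only integer coordinate is the `i`-th. The set of such `x` is
therefore swept out by the boundary pieces `facePart U i k`, `k ∈ ℤ`, along segments of length `h`,
and has measure at most `h ∑ k, H^{d-1}(facePart U i k)` (`volume_sweep_le`). The pieces are
disjoint, so summing over `i` and `k` gives at most `H^{d-1}(∂U)`.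

The unnormalized Hausdorff measure `μH` is only used through its being at least Lebesgue measure on
coordinate hyperplanes: the projection to `ℝ^{d-1}` with the sup norm is `1`-Lipschitz, and there
`μH[d-1]` is Lebesgue measure. All estimates are made in `ℝ≥0∞`, so infinite values of
`‖v * χ_r‖_∞` need no separate treatment.
-/

open MeasureTheory Metric Set Bornology
open scoped ENNReal RealInnerProductSpace

noncomputable section

/-! ### The boundary of a union of lattice cubes and its hyperplane pieces -/

/-- The part of the boundary of `U` lying in the hyperplane `{y i = k}`, off all the lattice
hyperplanes in the other coordinate directions. These pieces are pairwise disjoint. -/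
def facePart {d : ℕ} (U : Set (Euc d)) (i : Fin d) (k : ℤ) : Set (Euc d) :=
  frontier U ∩ {y | y i = k ∧ ∀ j, j ≠ i → ∀ m : ℤ, y j ≠ m}

lemma measurableSet_facePart {d : ℕ} (U : Set (Euc d)) (i : Fin d) (k : ℤ) :
    MeasurableSet (facePart U i k) := by
  refine isClosed_frontier.measurableSet.inter ?_
  refine MeasurableSet.inter (s₁ := {y : Euc d | y i = k})
    (s₂ := {y : Euc d | ∀ j, j ≠ i → ∀ m : ℤ, y j ≠ m}) ?_ ?_
  · exact measurableSet_eq_fun (by fun_prop) measurable_const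
  · have : {y : Euc d | ∀ j, j ≠ i → ∀ m : ℤ, y j ≠ m} =
        ⋂ j, ⋂ (_ : j ≠ i), ⋂ m : ℤ, {y : Euc d | y j = m}ᶜ := by
      ext; simp
    change MeasurableSet {y : Euc d | ∀ j, j ≠ i → ∀ m : ℤ, y j ≠ m}
    rw [this]
    refine .iInter fun j => .iInter fun _ => .iInter fun m => .compl ?_
    exact measurableSet_eq_fun (by fun_prop) measurable_const

lemma sum_facePart_le {d : ℕ} (U : Set (Euc d)) (μ : Measure (Euc d)) :
    ∑ i, ∑' k, μ (facePart U i k) ≤ μ (frontier U) := by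
  have h : ∑' p : Fin d × ℤ, μ (facePart U p.1 p.2) ≤ μ (frontier U) := by
    rw [← measure_iUnion]
    · exact measure_mono (iUnion_subset fun p => inter_subset_left)
    · rintro ⟨i, k⟩ ⟨j, l⟩ hne
      refine disjoint_left.2 fun y hy hy' => ?_
      obtain ⟨-, h1, h2⟩ := hy
      obtain ⟨-, h3, -⟩ := hy'
      by_cases hij : j = i
      · subst hij
        apply hne
        have : (k : ℝ) = l := h1.symm.trans h3
        simpa using this
      · exact h2 j hij l h3
    · exact fun p => measurableSet_facePart U p.1 p.2
  rwa [ENNReal.tsum_prod (f := fun i k => μ (facePart U i k)), tsum_fintype] at h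

lemma ae_not_int {d : ℕ} : ∀ᵐ x : Euc d, ∀ j, ∀ m : ℤ, x j ≠ m := by
  rw [ae_all_iff]; intro j
  rw [ae_all_iff]; intro m
  have h : ∀ᵐ x : Fin d → ℝ, x j ≠ m := by
    rw [ae_iff]
    simpa [volume_pi] using Measure.pi_hyperplane (fun _ : Fin d => (volume : Measure ℝ)) j (m : ℝ)
  exact (PiLp.volume_preserving_ofLp (Fin d)).quasiMeasurePreserving.ae h

/-- Sweeping a piece of the boundary in a hyperplane over a segment of length `h` orthogonal to it
fills a volume of at most `h` times its area. The projection along `e_i` is `1`-Lipschitz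
into the sup norm, where Hausdorff measure is Lebesgue measure. -/
lemma volume_sweep_le {n : ℕ} (U : Set (Euc (n + 1))) (i : Fin (n + 1)) (k : ℤ) (h : ℝ) :
    volume {x : Euc (n + 1) | ∃ t ∈ Icc 0 h,
      x + t • EuclideanSpace.single i (1 : ℝ) ∈ facePart U i k} ≤
      ENNReal.ofReal h * μH[(n : ℝ)] (facePart U i k) := by
  set P : Euc (n + 1) → (Fin n → ℝ) := fun x j => x (i.succAbove j) with hP
  have hlip : LipschitzWith 1 P := by
    refine LipschitzWith.of_dist_le_mul fun x y => ?_
    rw [NNReal.coe_one, one_mul]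
    refine (dist_pi_le_iff dist_nonneg).2 fun j => ?_
    rw [Real.dist_eq, dist_eq_norm]
    exact PiLp.norm_apply_le (x - y) (i.succAbove j)
  have hvol : volume (P '' facePart U i k) ≤ μH[(n : ℝ)] (facePart U i k) := by
    have h1 := hlip.hausdorffMeasure_image_le (d := (n : ℝ)) (by positivity) (facePart U i k)
    have h2 := hausdorffMeasure_pi_real (ι := Fin n)
    rw [Fintype.card_fin] at h2
    rw [h2] at h1
    simpa using h1
  calc _ ≤ volume ((WithLp.ofLp (p := 2) (V := Fin (n + 1) → ℝ)) ⁻¹'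
        ((MeasurableEquiv.piFinSuccAbove (fun _ => ℝ) i) ⁻¹'
          (Icc ((k : ℝ) - h) k ×ˢ (P '' facePart U i k)))) := by
        refine measure_mono ?_
        rintro x ⟨t, ht, hx⟩
        refine ⟨?_, _, hx, ?_⟩
        · have := hx.2.1
          simp at this
          change x i ∈ Icc _ _
          constructor <;> linarith [ht.1, ht.2]
        · ext j
          simp only [hP, PiLp.add_apply, PiLp.smul_apply]
          rw [PiLp.single_apply, if_neg (Fin.succAbove_ne i j), smul_zero, add_zero]
          rfl
    _ = volume (Icc ((k : ℝ) - h) k ×ˢ (P '' facePart U i k)) := by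
        rw [← (volume_preserving_piFinSuccAbove (fun _ => ℝ) i).measure_preimage_equiv]
        exact (EuclideanSpace.volume_preserving_symm_measurableEquiv_toLp
          (Fin (n + 1))).measure_preimage_equiv _
    _ = ENNReal.ofReal h * volume (P '' facePart U i k) := by
        rw [Measure.volume_eq_prod, Measure.prod_prod, Real.volume_Icc]
        congr 2; ring
    _ ≤ _ := by gcongr

lemma exists_frontier_of_segment {d : ℕ} {U : Set (Euc d)} {x e : Euc d} {h : ℝ} (hh : 0 ≤ h)
    (hx : ¬ (x + h • e ∈ U ↔ x ∈ U)) : ∃ t ∈ Icc 0 h, x + t • e ∈ frontier U := by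
  by_contra! hc
  have hpre : IsPreconnected ((fun t : ℝ => x + t • e) '' Icc 0 h) :=
    isPreconnected_Icc.image _ (by fun_prop)
  have hcov : ∀ t ∈ Icc 0 h, x + t • e ∈ interior U ∨ x + t • e ∈ (closure U)ᶜ := by
    intro t ht
    have := hc t ht
    rw [frontier, mem_sdiff] at this
    tauto
  have key := hpre (interior U) (closure U)ᶜ isOpen_interior isClosed_closure.isOpen_compl
    (by rintro _ ⟨t, ht, rfl⟩; exact hcov t ht)
  have hmem : ∀ t ∈ Icc 0 h, x + t • e ∈ (fun t : ℝ => x + t • e) '' Icc 0 h :=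
    fun t ht => ⟨t, ht, rfl⟩
  have h0 : (0 : ℝ) ∈ Icc 0 h := ⟨le_rfl, hh⟩
  have h1 : h ∈ Icc 0 h := ⟨hh, le_rfl⟩
  have hin : ∀ t ∈ Icc 0 h, x + t • e ∈ U → x + t • e ∈ interior U := fun t ht hU =>
    (hcov t ht).resolve_right fun hn => hn (subset_closure hU)
  have hout : ∀ t ∈ Icc 0 h, x + t • e ∉ U → x + t • e ∈ (closure U)ᶜ := fun t ht hU =>
    (hcov t ht).resolve_left fun hn => hU (interior_subset hn)
  have hx0 : x + (0 : ℝ) • e = x := by simp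
  have hne : ∀ s ∈ Icc 0 h, ∀ t ∈ Icc 0 h, x + s • e ∈ U → x + t • e ∉ U → False := by
    intro s hs t ht hsU htU
    obtain ⟨y, -, hy1, hy2⟩ := key ⟨_, hmem s hs, hin s hs hsU⟩ ⟨_, hmem t ht, hout t ht htU⟩
    exact hy2 (subset_closure (interior_subset hy1))
  have ha := hne 0 h0 h h1
  have hb := hne h h1 0 h0
  rw [hx0] at ha hb
  tauto

lemma isCompact_latticeCube {d : ℕ} (a : Fin d → ℤ) : IsCompact (latticeCube a) := by
  have h : latticeCube a = (EuclideanSpace.equiv (Fin d) ℝ) ⁻¹'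
      (Icc (fun i => (a i : ℝ)) (fun i => (a i : ℝ) + 1)) := by
    ext x
    simp [latticeCube, Pi.le_def, forall_and]
  rw [h]
  exact (EuclideanSpace.equiv (Fin d) ℝ).toHomeomorph.isCompact_preimage.2 isCompact_Icc

lemma isCompact_cubes {d : ℕ} {U : Set (Euc d)} (hU : IsFiniteUnionUnitCubes U) :
    IsCompact U := by
  obtain ⟨s, rfl⟩ := hU
  exact s.isCompact_biUnion fun a _ => isCompact_latticeCube a

lemma exists_int_of_mem_frontier {d : ℕ} {U : Set (Euc d)} (hU : IsFiniteUnionUnitCubes U)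
    {y : Euc d} (hy : y ∈ frontier U) : ∃ i, ∃ k : ℤ, y i = k := by
  by_contra! hc
  have hyU : y ∈ U := (isCompact_cubes hU).isClosed.frontier_subset hy
  apply hy.2
  obtain ⟨s, rfl⟩ := hU
  simp only [mem_iUnion] at hyU
  obtain ⟨a, ha, hya⟩ := hyU
  rw [mem_interior]
  refine ⟨⋂ i, {x : Euc d | (a i : ℝ) < x i ∧ x i < (a i : ℝ) + 1}, ?_, ?_, ?_⟩
  · intro x hx
    simp only [mem_iInter, mem_ofPred_eq] at hx
    exact mem_biUnion ha fun i => ⟨(hx i).1.le, (hx i).2.le⟩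
  · refine isOpen_iInter_of_finite fun i => ?_
    have hci : Continuous fun x : Euc d => x i := by fun_prop
    exact (isOpen_lt continuous_const hci).inter (isOpen_lt hci continuous_const)
  · simp only [mem_iInter, mem_ofPred_eq]
    intro i
    refine ⟨lt_of_le_of_ne (hya i).1 (hc i _).symm, lt_of_le_of_ne (hya i).2 ?_⟩
    have := hc i (a i + 1)
    push_cast at this
    exact this

lemma volume_frontier_eq_zero {d : ℕ} {U : Set (Euc d)} (hU : IsFiniteUnionUnitCubes U) :
    volume (frontier U) = 0 := by
  refine measure_mono_null (fun y hy => ?_) (ae_iff.1 (ae_not_int (d := d)))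
  obtain ⟨i, k, h⟩ := exists_int_of_mem_frontier hU hy
  simp only [mem_ofPred_eq, not_forall, not_not]
  exact ⟨i, k, h⟩

/-- Directional perimeter bound: translating `U` by `h • e_i` changes it by a set of measure at
most `h` times the area of the boundary pieces orthogonal to `e_i`, because a segment from `U`
to its complement crosses the boundary, almost surely at a point of such a piece. -/
lemma lintegral_indicator_diff_le {n : ℕ} {U : Set (Euc (n + 1))}
    (hU : IsFiniteUnionUnitCubes U) (i : Fin (n + 1)) {h : ℝ} (hh : 0 ≤ h) :
    ∫⁻ x, ‖U.indicator (1 : Euc (n + 1) → ℝ) (x + h • EuclideanSpace.single i (1 : ℝ)) -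
        U.indicator (1 : Euc (n + 1) → ℝ) x‖ₑ ≤
      ENNReal.ofReal h * ∑' k, μH[(n : ℝ)] (facePart U i k) := by
  set e : Euc (n + 1) := EuclideanSpace.single i (1 : ℝ) with he
  set S : ℤ → Set (Euc (n + 1)) := fun k => {x | ∃ t ∈ Icc 0 h, x + t • e ∈ facePart U i k}
  have hle : ∀ᵐ x : Euc (n + 1), ‖U.indicator (1 : Euc (n + 1) → ℝ) (x + h • e) -
      U.indicator (1 : Euc (n + 1) → ℝ) x‖ₑ ≤ (⋃ k, S k).indicator 1 x := by
    filter_upwards [ae_not_int (d := n + 1)] with x hx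
    by_cases hiff : x + h • e ∈ U ↔ x ∈ U
    · by_cases hxU : x ∈ U <;> simp [hiff, hxU]
    · have hmem : x ∈ ⋃ k, S k := by
        obtain ⟨t, ht, hf⟩ := exists_frontier_of_segment hh hiff
        have hj : ∀ j, j ≠ i → (x + t • e) j = x j := by
          intro j hj
          simp [he, hj]
        have hoff : ∀ j, j ≠ i → ∀ m : ℤ, (x + t • e) j ≠ m := by
          intro j hji m
          rw [hj j hji]
          exact hx j m
        obtain ⟨j, k, hk⟩ := exists_int_of_mem_frontier hU hf
        have hji : j = i := by
          by_contra hji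
          exact hoff j hji k hk
        subst hji
        exact mem_iUnion.2 ⟨k, t, ht, hf, hk, hoff⟩
      rw [indicator_of_mem hmem]
      by_cases hxU : x ∈ U <;> by_cases hxU' : x + h • e ∈ U <;> simp [hxU, hxU']
  calc _ ≤ ∫⁻ x, (⋃ k, S k).indicator 1 x := lintegral_mono_ae hle
    _ ≤ volume (⋃ k, S k) := lintegral_indicator_one_le _
    _ ≤ ∑' k, volume (S k) := measure_iUnion_le _
    _ ≤ ∑' k, ENNReal.ofReal h * μH[(n : ℝ)] (facePart U i k) :=
        ENNReal.tsum_le_tsum fun k => volume_sweep_le U i k h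
    _ = _ := ENNReal.tsum_mul_left

/-! ### Testing against functions smoothed by the normalized ball indicator -/

lemma measurable_chi (d : ℕ) (r : ℝ) : Measurable (chi d r) :=
  measurable_const.mul (measurable_one.indicator isClosed_closedBall.measurableSet)

lemma chi_nonneg (d : ℕ) (r : ℝ) (x : Euc d) : 0 ≤ chi d r x :=
  mul_nonneg (by positivity) (indicator_nonneg (fun _ _ => zero_le_one) _)

lemma chi_sub_comm (d : ℕ) (r : ℝ) (x y : Euc d) : chi d r (x - y) = chi d r (y - x) := by
  have : x - y ∈ closedBall (0 : Euc d) r ↔ y - x ∈ closedBall (0 : Euc d) r := by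
    simp only [mem_closedBall_zero_iff, norm_sub_rev]
  unfold chi
  by_cases h : y - x ∈ closedBall (0 : Euc d) r
  · rw [indicator_of_mem h, indicator_of_mem (this.2 h)]; rfl
  · rw [indicator_of_notMem h, indicator_of_notMem (fun h' => h (this.1 h'))]

lemma integrable_chi (d : ℕ) (r : ℝ) : Integrable (chi d r) := by
  refine Integrable.const_mul ?_ _
  refine (integrable_indicator_iff isClosed_closedBall.measurableSet).2 ?_
  exact integrableOn_const (isCompact_closedBall _ _).measure_lt_top.ne

lemma integral_chi (d : ℕ) {r : ℝ} (hr : 0 < r) : ∫ x, chi d r x = 1 := by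
  unfold chi
  rw [integral_const_mul, integral_indicator_one isClosed_closedBall.measurableSet]
  refine inv_mul_cancel₀ (ENNReal.toReal_pos ?_ ?_).ne'
  · exact (measure_closedBall_pos _ _ hr).ne'
  · exact (isCompact_closedBall _ _).measure_lt_top.ne

lemma hasCompactSupport_chi (d : ℕ) (r : ℝ) : HasCompactSupport (chi d r) := by
  refine HasCompactSupport.intro (isCompact_closedBall 0 r) fun x hx => ?_
  simp [chi, indicator_of_notMem hx]

/-- The convolution `ψ * χ_r` of a scalar test function with the normalized ball indicator. -/
def smoothed {d : ℕ} (r : ℝ) (ψ : Euc d → ℝ) : Euc d → ℝ :=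
  convolution (chi d r) ψ (ContinuousLinearMap.lsmul ℝ ℝ) volume

lemma smoothed_apply {d : ℕ} (r : ℝ) (ψ : Euc d → ℝ) (y : Euc d) :
    smoothed r ψ y = ∫ x, chi d r (x - y) * ψ x := by
  unfold smoothed
  rw [convolution_lsmul_swap]
  simp_rw [chi_sub_comm d r y, smul_eq_mul]

lemma contDiff_smoothed {d : ℕ} (r : ℝ) {ψ : Euc d → ℝ} (hψ : ContDiff ℝ (⊤ : ℕ∞) ψ)
    (hc : HasCompactSupport ψ) : ContDiff ℝ (⊤ : ℕ∞) (smoothed r ψ) :=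
  hc.contDiff_convolution_right _ (integrable_chi d r).locallyIntegrable hψ

lemma hasCompactSupport_smoothed {d : ℕ} (r : ℝ) {ψ : Euc d → ℝ}
    (hc : HasCompactSupport ψ) : HasCompactSupport (smoothed r ψ) :=
  (hasCompactSupport_chi d r).convolution _ hc

lemma smoothed_nonneg {d : ℕ} (r : ℝ) {ψ : Euc d → ℝ} (h0 : ∀ x, 0 ≤ ψ x) (y : Euc d) :
    0 ≤ smoothed r ψ y := by
  rw [smoothed_apply]
  exact integral_nonneg fun x => mul_nonneg (chi_nonneg _ _ _) (h0 x)

lemma integral_smoothed {d : ℕ} {r : ℝ} (hr : 0 < r) {ψ : Euc d → ℝ} (hψ : Continuous ψ)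
    (hc : HasCompactSupport ψ) : ∫ x, smoothed r ψ x = ∫ x, ψ x := by
  unfold smoothed
  rw [integral_convolution _ (integrable_chi d r) (hψ.integrable_of_hasCompactSupport hc),
    integral_chi d hr]
  simp

lemma lintegral_convMeasure {d : ℕ} (ν : Measure (Euc d)) [IsLocallyFiniteMeasure ν] (r : ℝ)
    {ψ : Euc d → ℝ} (hψ : Continuous ψ) (hc : HasCompactSupport ψ) (h0 : ∀ x, 0 ≤ ψ x) :
    ∫⁻ x, ENNReal.ofReal (ψ x) ∂(convMeasure ν r) =
      ∫⁻ y, ENNReal.ofReal (smoothed r ψ y) ∂ν := by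
  have hm : Measurable fun p : Euc d × Euc d => ENNReal.ofReal (chi d r (p.1 - p.2)) :=
    ((measurable_chi d r).comp (measurable_fst.sub measurable_snd)).ennreal_ofReal
  have hψm : Measurable fun x => ENNReal.ofReal (ψ x) := hψ.measurable.ennreal_ofReal
  unfold convMeasure
  rw [lintegral_withDensity_eq_lintegral_mul _ hm.lintegral_prod_right' hψm]
  simp only [Pi.mul_apply]
  have h1 : ∀ x, (∫⁻ y, ENNReal.ofReal (chi d r (x - y)) ∂ν) * ENNReal.ofReal (ψ x) =
      ∫⁻ y, ENNReal.ofReal (chi d r (x - y)) * ENNReal.ofReal (ψ x) ∂ν := fun x =>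
    (lintegral_mul_const _ (hm.comp measurable_prodMk_left)).symm
  simp_rw [h1]
  rw [lintegral_lintegral_swap]
  · refine lintegral_congr fun y => ?_
    rw [smoothed_apply, ofReal_integral_eq_lintegral_ofReal]
    · exact lintegral_congr fun x => (ENNReal.ofReal_mul (chi_nonneg _ _ _)).symm
    · obtain ⟨C, hC⟩ := hc.exists_bound_of_continuous hψ
      exact ((integrable_chi d r).comp_sub_right y).mul_bdd hψ.aestronglyMeasurable
        (Filter.Eventually.of_forall hC)
    · exact Filter.Eventually.of_forall fun x => mul_nonneg (chi_nonneg _ _ _) (h0 x)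
  · exact (hm.mul (hψm.comp measurable_fst)).aemeasurable

open scoped Pointwise in
/-- Differentiating `ψ * χ_r` and moving the (even) kernel `χ_r` from `∇ψ` to `v` by Fubini. -/
lemma integral_inner_gradient_smoothed {d : ℕ} {v : Euc d → Euc d}
    (hv : LocallyIntegrable v volume) (r : ℝ) {ψ : Euc d → ℝ} (hψ : ContDiff ℝ (⊤ : ℕ∞) ψ)
    (hc : HasCompactSupport ψ) :
    ∫ y, ⟪v y, gradient (smoothed r ψ) y⟫ = ∫ x, fderiv ℝ ψ x (convChi v r x) := by
  have hψ1 : ContDiff ℝ 1 ψ := hψ.of_le (by exact_mod_cast le_top)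
  have hdc : Continuous (fderiv ℝ ψ) := hψ1.continuous_fderiv one_ne_zero
  have hds : HasCompactSupport (fderiv ℝ ψ) := hc.fderiv ℝ
  have hchil := (integrable_chi d r).locallyIntegrable (μ := volume)
  have h1 : ∀ y, ⟪v y, gradient (smoothed r ψ) y⟫ =
      ∫ x, chi d r (x - y) * fderiv ℝ ψ x (v y) := by
    intro y
    rw [inner_gradient_right]
    have hd := (hc.hasFDerivAt_convolution_right (ContinuousLinearMap.lsmul ℝ ℝ) hchil hψ1 y).fderiv
    change fderiv ℝ (smoothed r ψ) y = _ at hd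
    rw [hd, convolution_precompR_apply _ hchil hds hdc, convolution_lsmul_swap]
    simp [chi_sub_comm d r y]
  simp_rw [h1]
  -- Both variables range over fixed compact sets wherever the integrand is nonzero.
  obtain ⟨C, hC⟩ := hds.exists_bound_of_continuous hdc
  have hint : Integrable (Function.uncurry fun y x => chi d r (x - y) * fderiv ℝ ψ x (v y))
      (volume.prod volume) := by
    set K := tsupport (fderiv ℝ ψ) with hK
    have hKc : IsCompact K := hds
    set K' := K + closedBall (0 : Euc d) r with hK'
    have hKc' : IsCompact K' := hKc.add (isCompact_closedBall _ _)
    set c := (volume (closedBall (0 : Euc d) r)).toReal⁻¹ with hcdef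
    have hc0 : 0 ≤ c := by positivity
    have hdom : Integrable (fun p : Euc d × Euc d =>
        K'.indicator (fun y => ‖v y‖) p.1 * K.indicator (fun _ => c * C) p.2)
        (volume.prod volume) := by
      refine Integrable.mul_prod ?_ ?_
      · exact (integrable_indicator_iff hKc'.measurableSet).2 (hv.integrableOn_isCompact hKc').norm
      · exact (integrableOn_const hKc.measure_lt_top.ne).integrable_indicator hKc.measurableSet
    refine hdom.mono' ?_ (Filter.Eventually.of_forall ?_)
    · refine AEStronglyMeasurable.mul ?_ ?_
      · exact ((measurable_chi d r).comp
          (measurable_snd.sub measurable_fst)).aestronglyMeasurable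
      · have hv' : AEStronglyMeasurable (fun p : Euc d × Euc d => v p.1)
            (volume.prod volume) := hv.aestronglyMeasurable.comp_fst
        have hd' : AEStronglyMeasurable (fun p : Euc d × Euc d => fderiv ℝ ψ p.2)
            (volume.prod volume) := (hdc.comp continuous_snd).aestronglyMeasurable
        exact isBoundedBilinearMap_apply.continuous.comp_aestronglyMeasurable (hd'.prodMk hv')
    · rintro ⟨y, x⟩
      simp only [Function.uncurry]
      by_cases hx : x ∈ K
      · by_cases hxy : x - y ∈ closedBall (0 : Euc d) r
        · have hy : y ∈ K' := by
            refine ⟨x, hx, y - x, ?_, by simp⟩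
            simpa [norm_sub_rev] using hxy
          rw [indicator_of_mem hy, indicator_of_mem hx, norm_mul, Real.norm_of_nonneg
            (chi_nonneg _ _ _)]
          have hchi : chi d r (x - y) = c := by simp [chi, indicator_of_mem hxy, hcdef]
          rw [hchi]
          calc c * ‖fderiv ℝ ψ x (v y)‖ ≤ c * (C * ‖v y‖) := by
                gcongr
                exact (ContinuousLinearMap.le_opNorm _ _).trans (by gcongr; exact hC x)
            _ = ‖v y‖ * (c * C) := by ring
        · have hchi : chi d r (x - y) = 0 := by simp [chi, indicator_of_notMem hxy]
          rw [hchi, zero_mul, norm_zero]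
          have hC0 : 0 ≤ C := (norm_nonneg _).trans (hC 0)
          exact mul_nonneg (indicator_nonneg (fun _ _ => norm_nonneg _) _)
            (indicator_nonneg (fun _ _ => mul_nonneg hc0 hC0) _)
      · have : fderiv ℝ ψ x = 0 := image_eq_zero_of_notMem_tsupport hx
        rw [this, indicator_of_notMem hx]
        simp
  rw [integral_integral_swap hint]
  refine integral_congr_ae (Filter.Eventually.of_forall fun x => ?_)
  simp only [convChi]
  have hvi : Integrable fun y => chi d r (x - y) • v y := by
    have hcs : HasCompactSupport (fun y => chi d r (x - y)) :=
      (hasCompactSupport_chi d r).comp_homeomorph (Homeomorph.subLeft x)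
    set K := tsupport fun y => chi d r (x - y)
    have hKc : IsCompact K := hcs
    have hbd : ∀ y, ‖chi d r (x - y)‖ ≤ (volume (closedBall (0 : Euc d) r)).toReal⁻¹ := by
      intro y
      rw [Real.norm_of_nonneg (chi_nonneg _ _ _)]
      unfold chi
      refine mul_le_of_le_one_right (by positivity) ?_
      exact indicator_le_self' (fun _ _ => zero_le_one) _
    have hI : Integrable (K.indicator v) :=
      (hv.integrableOn_isCompact hKc).integrable_indicator hKc.measurableSet
    have := hI.bdd_smul (φ := fun y => chi d r (x - y)) _
      ((measurable_chi d r).comp (measurable_const.sub measurable_id)).aestronglyMeasurable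
      (Filter.Eventually.of_forall hbd)
    refine this.congr (Filter.Eventually.of_forall fun y => ?_)
    by_cases hy : y ∈ K
    · simp [indicator_of_mem hy]
    · simp [image_eq_zero_of_notMem_tsupport (f := fun y => chi d r (x - y)) hy]
  rw [← ContinuousLinearMap.integral_comp_comm _ hvi]
  simp

/-- The weak divergence equation, tested against `ψ * χ_r`. -/
lemma smoothed_test {d : ℕ} {ν : Measure (Euc d)} [IsLocallyFiniteMeasure ν]
    {v : Euc d → Euc d} (hv : LocallyIntegrable v volume) (hconn : Connects v ν)
    {r : ℝ} (hr : 0 < r) {ψ : Euc d → ℝ} (hψ : ContDiff ℝ (⊤ : ℕ∞) ψ)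
    (hc : HasCompactSupport ψ) (h0 : ∀ x, 0 ≤ ψ x) :
    ∫⁻ x, ENNReal.ofReal (ψ x) ∂(convMeasure ν r) ≤ (∫⁻ x, ENNReal.ofReal (ψ x)) +
      essSup (fun x => (‖convChi v r x‖₊ : ℝ≥0∞)) volume * ∫⁻ x, ‖fderiv ℝ ψ x‖ₑ ∧
    ∫⁻ x, ENNReal.ofReal (ψ x) ≤ (∫⁻ x, ENNReal.ofReal (ψ x) ∂(convMeasure ν r)) +
      essSup (fun x => (‖convChi v r x‖₊ : ℝ≥0∞)) volume * ∫⁻ x, ‖fderiv ℝ ψ x‖ₑ := by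
  set M := essSup (fun x => (‖convChi v r x‖₊ : ℝ≥0∞)) volume
  have hs := contDiff_smoothed r hψ hc
  have hsc := hasCompactSupport_smoothed r hc
  have key := hconn _ hs hsc
  rw [integral_inner_gradient_smoothed hv r hψ hc, integral_smoothed hr hψ.continuous hc] at key
  have hA : ∫⁻ x, ENNReal.ofReal (ψ x) ∂(convMeasure ν r) =
      ENNReal.ofReal (∫ y, smoothed r ψ y ∂ν) := by
    rw [lintegral_convMeasure ν r hψ.continuous hc h0, ofReal_integral_eq_lintegral_ofReal
      (hs.continuous.integrable_of_hasCompactSupport hsc)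
      (Filter.Eventually.of_forall (smoothed_nonneg r h0))]
  have hB : ∫⁻ x, ENNReal.ofReal (ψ x) = ENNReal.ofReal (∫ x, ψ x) :=
    (ofReal_integral_eq_lintegral_ofReal (hψ.continuous.integrable_of_hasCompactSupport hc)
      (Filter.Eventually.of_forall h0)).symm
  have hbound : ‖∫ x, fderiv ℝ ψ x (convChi v r x)‖ₑ ≤ M * ∫⁻ x, ‖fderiv ℝ ψ x‖ₑ := by
    have hdc : Continuous (fderiv ℝ ψ) := (hψ.of_le (by exact_mod_cast le_top) :
      ContDiff ℝ 1 ψ).continuous_fderiv one_ne_zero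
    rw [← lintegral_const_mul _ hdc.measurable.enorm]
    refine (enorm_integral_le_lintegral_enorm _).trans (lintegral_mono_ae ?_)
    filter_upwards [ENNReal.ae_le_essSup fun x => (‖convChi v r x‖₊ : ℝ≥0∞)] with x hx
    calc ‖fderiv ℝ ψ x (convChi v r x)‖ₑ ≤ ‖fderiv ℝ ψ x‖ₑ * ‖convChi v r x‖ₑ :=
          ContinuousLinearMap.le_opENorm _ _
      _ ≤ M * ‖fderiv ℝ ψ x‖ₑ := by
          rw [mul_comm]
          exact mul_le_mul_left hx _
  rw [hA, hB]
  rw [← ofReal_norm, key, Real.norm_eq_abs] at hbound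
  constructor
  · refine le_trans ?_ (add_le_add_right hbound _)
    refine le_trans (ENNReal.ofReal_le_ofReal ?_) ENNReal.ofReal_add_le
    linarith [neg_abs_le ((∫ x, ψ x) - ∫ y, smoothed r ψ y ∂ν)]
  · refine le_trans ?_ (add_le_add_right hbound _)
    refine le_trans (ENNReal.ofReal_le_ofReal ?_) ENNReal.ofReal_add_le
    linarith [le_abs_self ((∫ x, ψ x) - ∫ y, smoothed r ψ y ∂ν)]

/-! ### Mollified indicators and their total variation -/

lemma enorm_clm_le_sum {d : ℕ} (L : Euc d →L[ℝ] ℝ) :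
    ‖L‖ₑ ≤ ∑ i, ‖L (EuclideanSpace.single i (1 : ℝ))‖ₑ := by
  have h : ‖L‖ ≤ ∑ i, ‖L (EuclideanSpace.single i (1 : ℝ))‖ := by
    refine L.opNorm_le_bound (Finset.sum_nonneg fun _ _ => norm_nonneg _) fun x => ?_
    have hx : x = ∑ i, x i • EuclideanSpace.single i (1 : ℝ) := by
      ext j
      simp [Pi.single_apply]
    calc ‖L x‖ = ‖∑ i, x i • L (EuclideanSpace.single i (1 : ℝ))‖ := by
          conv_lhs => rw [hx, map_sum]
          simp
      _ ≤ ∑ i, ‖x i • L (EuclideanSpace.single i (1 : ℝ))‖ := norm_sum_le _ _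
      _ ≤ ∑ i, ‖L (EuclideanSpace.single i (1 : ℝ))‖ * ‖x‖ := by
          refine Finset.sum_le_sum fun i _ => ?_
          rw [norm_smul, mul_comm]
          gcongr
          exact PiLp.norm_apply_le x i
      _ = _ := by rw [Finset.sum_mul]
  rw [← ofReal_norm]
  refine (ENNReal.ofReal_le_ofReal h).trans ?_
  rw [ENNReal.ofReal_sum_of_nonneg fun _ _ => norm_nonneg _]
  exact le_of_eq (Finset.sum_congr rfl fun i _ => ofReal_norm _)

/-- The mollification of the indicator of `U` by the normalized bump function `ρ`. -/
def mollInd {d : ℕ} (U : Set (Euc d)) (ρ : ContDiffBump (0 : Euc d)) : Euc d → ℝ :=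
  convolution (ρ.normed volume) (U.indicator 1) (ContinuousLinearMap.lsmul ℝ ℝ) volume

lemma integrable_ind {d : ℕ} {U : Set (Euc d)} (hU : IsCompact U) :
    Integrable (U.indicator (1 : Euc d → ℝ)) :=
  (integrable_indicator_iff hU.measurableSet).2 (integrableOn_const hU.measure_lt_top.ne)

lemma contDiff_mollInd {d : ℕ} {U : Set (Euc d)} (hU : IsCompact U)
    (ρ : ContDiffBump (0 : Euc d)) : ContDiff ℝ (⊤ : ℕ∞) (mollInd U ρ) :=
  ρ.hasCompactSupport_normed.contDiff_convolution_left _ ρ.contDiff_normed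
    (integrable_ind hU).locallyIntegrable

lemma hasCompactSupport_mollInd {d : ℕ} {U : Set (Euc d)} (hU : IsCompact U)
    (ρ : ContDiffBump (0 : Euc d)) : HasCompactSupport (mollInd U ρ) :=
  ρ.hasCompactSupport_normed.convolution _
    (HasCompactSupport.intro hU fun _ hx => indicator_of_notMem hx _)

lemma mollInd_nonneg {d : ℕ} (U : Set (Euc d)) (ρ : ContDiffBump (0 : Euc d)) (x : Euc d) :
    0 ≤ mollInd U ρ x :=
  integral_nonneg fun t => mul_nonneg (ρ.nonneg_normed t)
    (indicator_nonneg (fun _ _ => zero_le_one) _)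

lemma integrable_mollInd_integrand {d : ℕ} {U : Set (Euc d)} (hU : IsCompact U)
    (ρ : ContDiffBump (0 : Euc d)) (x : Euc d) :
    Integrable fun t => ρ.normed volume t * U.indicator (1 : Euc d → ℝ) (x - t) := by
  refine (ρ.integrable_normed (μ := volume)).mul_bdd (c := 1) ?_
    (Filter.Eventually.of_forall fun t => ?_)
  · exact ((measurable_one.indicator hU.measurableSet).comp
      (measurable_const.sub measurable_id)).aestronglyMeasurable
  · have h0 : 0 ≤ U.indicator (1 : Euc d → ℝ) (x - t) :=
      indicator_nonneg (fun _ _ => zero_le_one) _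
    rw [Real.norm_of_nonneg h0]
    exact indicator_le_self' (fun _ _ => zero_le_one) _

lemma mollInd_le_one {d : ℕ} {U : Set (Euc d)} (hU : IsCompact U)
    (ρ : ContDiffBump (0 : Euc d)) (x : Euc d) : mollInd U ρ x ≤ 1 := by
  rw [← ρ.integral_normed (μ := volume)]
  refine integral_mono (integrable_mollInd_integrand hU ρ x) ρ.integrable_normed fun t => ?_
  exact mul_le_of_le_one_right (ρ.nonneg_normed t)
    (indicator_le_self' (fun _ _ => zero_le_one) _)

lemma mollInd_eq_zero {d : ℕ} {U : Set (Euc d)} {R : ℝ} (hUR : U ⊆ closedBall 0 R)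
    (ρ : ContDiffBump (0 : Euc d)) (hρ : ρ.rOut ≤ 1) {x : Euc d}
    (hx : x ∉ closedBall (0 : Euc d) (R + 1)) : mollInd U ρ x = 0 := by
  have h := ρ.normed_convolution_eq_right (μ := volume) (g := U.indicator (1 : Euc d → ℝ))
    (x₀ := x)
  have hx' : R + 1 < ‖x‖ := by simpa using hx
  have hz : ∀ y ∈ ball x ρ.rOut, U.indicator (1 : Euc d → ℝ) y = 0 := by
    intro y hy
    refine indicator_of_notMem (fun hyU => ?_) _
    have h1 : ‖y‖ ≤ R := by simpa using hUR hyU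
    have h2 : ‖x‖ - ‖y‖ ≤ ‖x - y‖ := norm_sub_norm_le _ _
    have h3 : ‖x - y‖ < ρ.rOut := by rw [← dist_eq_norm, dist_comm]; exact hy
    linarith
  have hz0 := hz x (mem_ball_self ρ.rOut_pos)
  rw [hz0] at h
  exact h hz

lemma mollInd_eq {d : ℕ} {U : Set (Euc d)} {x : Euc d} (hx : x ∉ frontier U) :
    ∃ ε > 0, ∀ ρ : ContDiffBump (0 : Euc d), ρ.rOut ≤ ε →
      mollInd U ρ x = U.indicator (1 : Euc d → ℝ) x := by
  have hloc : ∃ ε > 0, ∀ y ∈ ball x ε,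
      U.indicator (1 : Euc d → ℝ) y = U.indicator (1 : Euc d → ℝ) x := by
    by_cases hxi : x ∈ interior U
    · obtain ⟨ε, hε, hb⟩ := Metric.isOpen_iff.1 isOpen_interior x hxi
      refine ⟨ε, hε, fun y hy => ?_⟩
      rw [indicator_of_mem (interior_subset (hb hy)), indicator_of_mem (interior_subset hxi)]
      rfl
    · have hxc : x ∈ (closure U)ᶜ := fun hc => hx ⟨hc, hxi⟩
      obtain ⟨ε, hε, hb⟩ := Metric.isOpen_iff.1 isClosed_closure.isOpen_compl x hxc
      refine ⟨ε, hε, fun y hy => ?_⟩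
      rw [indicator_of_notMem fun h => hb hy (subset_closure h),
        indicator_of_notMem fun h => hxc (subset_closure h)]
  obtain ⟨ε, hε, h⟩ := hloc
  exact ⟨ε, hε, fun ρ hρ =>
    ρ.normed_convolution_eq_right fun y hy => h y (ball_subset_ball hρ hy)⟩

/-- Mollification does not increase the `L¹` norm of a difference of translates. -/
lemma lintegral_mollInd_diff_le {d : ℕ} {U : Set (Euc d)} (hU : IsCompact U)
    (ρ : ContDiffBump (0 : Euc d)) (e : Euc d) :
    ∫⁻ x, ‖mollInd U ρ (x + e) - mollInd U ρ x‖ₑ ≤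
      ∫⁻ x, ‖U.indicator (1 : Euc d → ℝ) (x + e) - U.indicator (1 : Euc d → ℝ) x‖ₑ := by
  set g : Euc d → ℝ := U.indicator 1 with hg
  have hgm : Measurable g := measurable_one.indicator hU.measurableSet
  have hρm : Measurable (ρ.normed (volume : Measure (Euc d))) := ρ.continuous_normed.measurable
  have hpt : ∀ x, ‖mollInd U ρ (x + e) - mollInd U ρ x‖ₑ ≤
      ∫⁻ t, ‖ρ.normed volume t‖ₑ * ‖g (x - t + e) - g (x - t)‖ₑ := by
    intro x
    have : mollInd U ρ (x + e) - mollInd U ρ x =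
        ∫ t, ρ.normed volume t * (g (x - t + e) - g (x - t)) := by
      change (∫ t, ρ.normed volume t * g (x + e - t)) - ∫ t, ρ.normed volume t * g (x - t) = _
      rw [← integral_sub (integrable_mollInd_integrand hU ρ (x + e))
        (integrable_mollInd_integrand hU ρ x)]
      refine integral_congr_ae (Filter.Eventually.of_forall fun t => ?_)
      simp only
      rw [mul_sub, show x + e - t = x - t + e by abel]
    rw [this]
    refine (enorm_integral_le_lintegral_enorm _).trans (le_of_eq ?_)
    exact lintegral_congr fun t => enorm_mul _ _
  have hone : ∫⁻ t, ‖ρ.normed (volume : Measure (Euc d)) t‖ₑ = 1 := by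
    rw [← ofReal_integral_norm_eq_lintegral_enorm ρ.integrable_normed]
    simp_rw [Real.norm_of_nonneg (ρ.nonneg_normed _)]
    rw [ρ.integral_normed, ENNReal.ofReal_one]
  have hdm : Measurable fun y => ‖g (y + e) - g y‖ₑ :=
    ((hgm.comp (measurable_id.add_const e)).sub hgm).enorm
  calc _ ≤ ∫⁻ x, ∫⁻ t, ‖ρ.normed volume t‖ₑ * ‖g (x - t + e) - g (x - t)‖ₑ :=
        lintegral_mono hpt
    _ = ∫⁻ t, ∫⁻ x, ‖ρ.normed volume t‖ₑ * ‖g (x - t + e) - g (x - t)‖ₑ := by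
        refine lintegral_lintegral_swap (Measurable.aemeasurable ?_)
        exact (hρm.enorm.comp measurable_snd).mul
          (hdm.comp (measurable_fst.sub measurable_snd))
    _ = ∫⁻ t, ‖ρ.normed volume t‖ₑ * ∫⁻ x, ‖g (x + e) - g x‖ₑ := by
        refine lintegral_congr fun t => ?_
        rw [lintegral_const_mul (f := fun x => ‖g (x - t + e) - g (x - t)‖ₑ) _
          (hdm.comp (measurable_id.sub_const t))]
        congr 1
        exact lintegral_sub_right_eq_self (fun y => ‖g (y + e) - g y‖ₑ) t
    _ = _ := by
        rw [lintegral_mul_const _ hρm.enorm, hone, one_mul]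

/-- The directional derivative of the mollified indicator is the limit of difference quotients,
so Fatou's lemma transfers the directional perimeter bound to it. -/
lemma lintegral_fderiv_mollInd_dir_le {n : ℕ} {U : Set (Euc (n + 1))}
    (hU : IsFiniteUnionUnitCubes U) (ρ : ContDiffBump (0 : Euc (n + 1))) (i : Fin (n + 1)) :
    ∫⁻ x, ‖fderiv ℝ (mollInd U ρ) x (EuclideanSpace.single i (1 : ℝ))‖ₑ ≤
      ∑' k, μH[(n : ℝ)] (facePart U i k) := by
  have hUc := isCompact_cubes hU
  set e : Euc (n + 1) := EuclideanSpace.single i (1 : ℝ) with he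
  set ψ := mollInd U ρ with hψ
  have hcd := contDiff_mollInd hUc ρ
  set s : ℕ → ℝ := fun m => 1 / ((m : ℝ) + 1) with hs
  have hspos : ∀ m, 0 < s m := fun m => by positivity
  have hslim : Filter.Tendsto s Filter.atTop (nhdsWithin 0 (Ioi 0)) :=
    tendsto_nhdsWithin_iff.2 ⟨tendsto_one_div_add_atTop_nhds_zero_nat,
      Filter.Eventually.of_forall hspos⟩
  have hlim : ∀ x, Filter.Tendsto (fun m => ‖(s m)⁻¹ • (ψ (x + s m • e) - ψ x)‖ₑ) Filter.atTop
      (nhds ‖fderiv ℝ ψ x e‖ₑ) := by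
    intro x
    have hd : HasLineDerivAt ℝ ψ (fderiv ℝ ψ x e) x e :=
      ((hcd.differentiable (by simp)) x).hasFDerivAt.hasLineDerivAt e
    exact (hd.tendsto_slope_zero_right.comp hslim).enorm
  calc _ = ∫⁻ x, Filter.liminf (fun m => ‖(s m)⁻¹ • (ψ (x + s m • e) - ψ x)‖ₑ) Filter.atTop :=
        lintegral_congr fun x => (hlim x).liminf_eq.symm
    _ ≤ Filter.liminf (fun m => ∫⁻ x, ‖(s m)⁻¹ • (ψ (x + s m • e) - ψ x)‖ₑ) Filter.atTop := by
        refine lintegral_liminf_le fun m => ?_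
        have hc : Continuous ψ := hcd.continuous
        exact Continuous.measurable (by fun_prop)
    _ ≤ Filter.liminf (fun _ : ℕ => ∑' k, μH[(n : ℝ)] (facePart U i k)) Filter.atTop := by
        refine Filter.liminf_le_liminf (Filter.Eventually.of_forall fun m => ?_)
        simp_rw [enorm_smul]
        have hc : Continuous ψ := hcd.continuous
        rw [lintegral_const_mul _ (Continuous.measurable (by fun_prop))]
        have h1 := (lintegral_mollInd_diff_le hUc ρ (s m • e)).trans
          (lintegral_indicator_diff_le hU i (hspos m).le)
        calc ‖(s m)⁻¹‖ₑ * _ ≤ ‖(s m)⁻¹‖ₑ *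
              (ENNReal.ofReal (s m) * ∑' k, μH[(n : ℝ)] (facePart U i k)) := by gcongr
          _ = _ := by
              rw [← mul_assoc, Real.enorm_of_nonneg (inv_nonneg.2 (hspos m).le),
                ← ENNReal.ofReal_mul (inv_nonneg.2 (hspos m).le),
                inv_mul_cancel₀ (hspos m).ne', ENNReal.ofReal_one, one_mul]
    _ = _ := Filter.liminf_const _

lemma lintegral_fderiv_mollInd_le {n : ℕ} {U : Set (Euc (n + 1))}
    (hU : IsFiniteUnionUnitCubes U) (ρ : ContDiffBump (0 : Euc (n + 1))) :
    ∫⁻ x, ‖fderiv ℝ (mollInd U ρ) x‖ₑ ≤ μH[(n : ℝ)] (frontier U) := by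
  have hdc : Continuous (fderiv ℝ (mollInd U ρ)) :=
    ((contDiff_mollInd (isCompact_cubes hU) ρ).of_le (by exact_mod_cast le_top) :
      ContDiff ℝ 1 (mollInd U ρ)).continuous_fderiv one_ne_zero
  calc _ ≤ ∫⁻ x, ∑ i, ‖fderiv ℝ (mollInd U ρ) x (EuclideanSpace.single i (1 : ℝ))‖ₑ :=
        lintegral_mono fun x => enorm_clm_le_sum _
    _ = ∑ i, ∫⁻ x, ‖fderiv ℝ (mollInd U ρ) x (EuclideanSpace.single i (1 : ℝ))‖ₑ :=
        lintegral_finsetSum _ fun i _ => Continuous.measurable (by fun_prop)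
    _ ≤ ∑ i, ∑' k, μH[(n : ℝ)] (facePart U i k) :=
        Finset.sum_le_sum fun i _ => lintegral_fderiv_mollInd_dir_le hU ρ i
    _ ≤ _ := sum_facePart_le U _

/-- Mollified indicators converge in integral, by dominated convergence, for any measure that does
not charge the boundary and is finite on a ball containing all their supports. -/
lemma tendsto_lintegral_mollInd {d : ℕ} {U : Set (Euc d)} (hU : IsCompact U) {R : ℝ}
    (hUR : U ⊆ closedBall 0 R) (μ : Measure (Euc d)) (hμ : μ (closedBall 0 (R + 1)) ≠ ∞)
    (hfr : μ (frontier U) = 0) (ρ : ℕ → ContDiffBump (0 : Euc d))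
    (hρ1 : ∀ m, (ρ m).rOut ≤ 1)
    (hρ : Filter.Tendsto (fun m => (ρ m).rOut) Filter.atTop (nhds 0)) :
    Filter.Tendsto (fun m => ∫⁻ x, ENNReal.ofReal (mollInd U (ρ m) x) ∂μ) Filter.atTop
      (nhds (μ U)) := by
  have hlimit : μ U = ∫⁻ x, ENNReal.ofReal (U.indicator (1 : Euc d → ℝ) x) ∂μ := by
    rw [← lintegral_indicator_one hU.measurableSet]
    refine lintegral_congr fun x => ?_
    by_cases hx : x ∈ U <;> simp [hx]
  rw [hlimit]
  refine tendsto_lintegral_of_dominated_convergence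
    ((closedBall (0 : Euc d) (R + 1)).indicator 1) (fun m => ?_) (fun m => ?_) ?_ ?_
  · exact (contDiff_mollInd hU (ρ m)).continuous.measurable.ennreal_ofReal
  · refine Filter.Eventually.of_forall fun x => ?_
    by_cases hx : x ∈ closedBall (0 : Euc d) (R + 1)
    · simpa only [indicator_of_mem hx, Pi.one_apply, ENNReal.ofReal_le_one] using
        mollInd_le_one hU (ρ m) x
    · simp [mollInd_eq_zero hUR (ρ m) (hρ1 m) hx]
  · rwa [lintegral_indicator_one isClosed_closedBall.measurableSet]
  · have hae : ∀ᵐ x ∂μ, x ∉ frontier U := measure_eq_zero_iff_ae_notMem.1 hfr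
    filter_upwards [hae] with x hx
    obtain ⟨ε, hε, h⟩ := mollInd_eq hx
    refine tendsto_const_nhds.congr' ?_
    filter_upwards [hρ.eventually (gt_mem_nhds hε)] with m hm
    rw [h (ρ m) hm.le]

lemma convMeasure_closedBall_ne_top {d : ℕ} (ν : Measure (Euc d)) [IsLocallyFiniteMeasure ν]
    (r R : ℝ) (hR : 0 < R) : convMeasure ν r (closedBall 0 R) ≠ ∞ := by
  let b : ContDiffBump (0 : Euc d) := ⟨R, R + 1, hR, by linarith⟩
  have hb : ContDiff ℝ (⊤ : ℕ∞) b := b.contDiff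
  have h := lintegral_convMeasure ν r hb.continuous b.hasCompactSupport b.nonneg'
  have hs := contDiff_smoothed r hb b.hasCompactSupport
  have hfin : ∫⁻ y, ENNReal.ofReal (smoothed r b y) ∂ν ≠ ∞ :=
    (hs.continuous.integrable_of_hasCompactSupport
      (hasCompactSupport_smoothed r b.hasCompactSupport)).lintegral_lt_top.ne
  rw [← h] at hfin
  refine ne_top_of_le_ne_top hfin ?_
  rw [← lintegral_indicator_one isClosed_closedBall.measurableSet]
  refine lintegral_mono fun x => ?_
  by_cases hx : x ∈ closedBall (0 : Euc d) R
  · have : b x = 1 := b.one_of_mem_closedBall hx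
    simp [indicator_of_mem hx, this]
  · simp [indicator_of_notMem hx]

/-- If `v` is a locally integrable vector field connecting `ν` and
`m_d`, `r > 0`, and `U` is a finite union of unit lattice cubes, then
`|(ν * χ_r)(U) − m_d(U)| ≤ ‖v * χ_r‖_∞ · H^{d−1}(∂U)`. -/
theorem stmt_13 (d : ℕ) (hd : 1 ≤ d) (ν : Measure (Euc d)) [IsLocallyFiniteMeasure ν]
    (v : Euc d → Euc d) (hv : LocallyIntegrable v volume) (hconn : Connects v ν)
    (r : ℝ) (hr : 0 < r) (U : Set (Euc d)) (hU : IsFiniteUnionUnitCubes U) :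
    convMeasure ν r U ≤
        volume U +
          essSup (fun x => (‖convChi v r x‖₊ : ℝ≥0∞)) volume *
            μH[(d : ℝ) - 1] (frontier U) ∧
    volume U ≤
        convMeasure ν r U +
          essSup (fun x => (‖convChi v r x‖₊ : ℝ≥0∞)) volume *
            μH[(d : ℝ) - 1] (frontier U) := by
  obtain ⟨n, rfl⟩ : ∃ n, d = n + 1 := ⟨d - 1, by omega⟩
  have hdim : ((n + 1 : ℕ) : ℝ) - 1 = n := by push_cast; ring
  rw [hdim]
  set M := essSup (fun x => (‖convChi v r x‖₊ : ℝ≥0∞)) volume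
  have hUc := isCompact_cubes hU
  obtain ⟨R, hR, hUR⟩ : ∃ R : ℝ, 0 < R ∧ U ⊆ closedBall 0 R := by
    obtain ⟨R, hR⟩ := hUc.isBounded.subset_closedBall 0
    exact ⟨max R 1, by positivity, hR.trans (closedBall_subset_closedBall (le_max_left _ _))⟩
  have hfr := volume_frontier_eq_zero hU
  have hfr' : convMeasure ν r (frontier U) = 0 := withDensity_absolutelyContinuous _ _ hfr
  let ρ : ℕ → ContDiffBump (0 : Euc (n + 1)) := fun m =>
    ⟨1 / ((m : ℝ) + 1) / 2, 1 / ((m : ℝ) + 1), by positivity, half_lt_self (by positivity)⟩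
  have hρ1 : ∀ m, (ρ m).rOut ≤ 1 := fun m => by
    change 1 / ((m : ℝ) + 1) ≤ 1
    rw [div_le_one (by positivity)]
    linarith [m.cast_nonneg (α := ℝ)]
  have hρ : Filter.Tendsto (fun m => (ρ m).rOut) Filter.atTop (nhds 0) :=
    tendsto_one_div_add_atTop_nhds_zero_nat
  have hlim := tendsto_lintegral_mollInd hUc hUR volume
    (isCompact_closedBall _ _).measure_lt_top.ne hfr ρ hρ1 hρ
  have hlim' := tendsto_lintegral_mollInd hUc hUR (convMeasure ν r)
    (convMeasure_closedBall_ne_top ν r (R + 1) (by linarith)) hfr' ρ hρ1 hρ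
  have htest := fun m => smoothed_test hv hconn hr (contDiff_mollInd hUc (ρ m))
    (hasCompactSupport_mollInd hUc (ρ m)) (mollInd_nonneg U (ρ m))
  have htv : ∀ m, M * ∫⁻ x, ‖fderiv ℝ (mollInd U (ρ m)) x‖ₑ ≤ M * μH[(n : ℝ)] (frontier U) :=
    fun m => by gcongr; exact lintegral_fderiv_mollInd_le hU (ρ m)
  constructor
  · refine le_of_tendsto_of_tendsto' hlim' (hlim.add tendsto_const_nhds) fun m => ?_
    exact (htest m).1.trans (add_le_add_right (htv m) _)
  · refine le_of_tendsto_of_tendsto' hlim (hlim'.add tendsto_const_nhds) fun m => ?_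
    exact (htest m).2.trans (add_le_add_right (htv m) _)
end
end

section
/- For every locally finite nonnegative Borel measure ν on ℝ^d, there exists a locally integrable vector field v : ℝ^d → ℝ^d connecting ν and m_d, i.e. satisfying div v = ν − m_d weakly. -/
/-!
It suffices to write an arbitrary locally finite measure `ν` as the divergence of a locally
integrable field (`exists_field_of_measure`): subtracting the field obtained for Lebesgue measure
from the one obtained for `ν` then connects the two.

Given a vector `u ≠ 0`, the vector-valued measure `u dt` carried by the ray `t ↦ y + t u`, `t > 0`,
has divergence `δ_y`, by the fundamental theorem of calculus along the ray. Let `e(y)` be a unit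
vector pointing from the origin to `y`. The rays used from `y` are those with direction
`u = e(y) + w`, averaged over `w` uniform in the ball of radius `1/2`, and then integrated over `y`
with respect to `ν`. Such rays satisfy `‖y + t u‖ ≥ ‖y‖ + t / 2` (`norm_add_le_norm_ray`), so only
starting points `y` and times `t` bounded by a multiple of `R` contribute to the ball of radius
`R`, and the resulting vector-valued measure has locally finite variation. It is absolutely
continuous since, for fixed `y` and `t > 0`, the point `y + t (e(y) + w)` is a nondegenerate affine
function of `w`. Its Radon–Nikodym density (`exists_vector_density`) is the required field, and
Fubini's theorem gives its divergence.
-/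


open MeasureTheory Metric Set Bornology
open scoped ENNReal RealInnerProductSpace

noncomputable section

/-- A nonnegative bounded weight `b` on `(P, μ)`, pushed forward along `T`, has a locally integrable
Lebesgue density as soon as `μ.map T` is locally finite and absolutely continuous. -/
lemma exists_density_of_nonneg {d : ℕ} {P : Type*} [MeasurableSpace P] (μ : Measure P)
    (T : P → Euc d) (hT : Measurable T) (hac : μ.map T ≪ volume)
    [IsLocallyFiniteMeasure (μ.map T)] (b : P → ℝ) (hb : Measurable b) (C : ℝ)
    (h0 : ∀ᵐ p ∂μ, 0 ≤ b p) (hC : ∀ᵐ p ∂μ, b p ≤ C) :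
    ∃ h : Euc d → ℝ, LocallyIntegrable h volume ∧
      ∀ ψ : Euc d → ℝ, Continuous ψ → ∫ x, h x * ψ x = ∫ p, b p * ψ (T p) ∂μ := by
  set lam : Measure (Euc d) := (μ.withDensity fun p => ENNReal.ofReal (b p)).map T with hlam
  have hle : lam ≤ Real.toNNReal C • μ.map T := by
    calc lam ≤ (μ.withDensity fun _ => ENNReal.ofReal C).map T := by
          refine Measure.map_mono (withDensity_mono ?_) hT
          filter_upwards [hC] with p hp using ENNReal.ofReal_le_ofReal hp
      _ = Real.toNNReal C • μ.map T := by
          rw [withDensity_const, Measure.map_smul]; rfl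
  have hlf : IsLocallyFiniteMeasure lam := Measure.isLocallyFiniteMeasure_of_le hle
  have hlac : lam ≪ volume := (Measure.absolutelyContinuous_of_le hle).trans
    (hac.smul_left _)
  refine ⟨fun x => (lam.rnDeriv volume x).toReal, ?_, fun ψ hψ => ?_⟩
  · rw [locallyIntegrable_iff]
    intro K hK
    refine integrable_toReal_of_lintegral_ne_top (Measure.measurable_rnDeriv _ _).aemeasurable ?_
    exact ((Measure.setLIntegral_rnDeriv_le K).trans_lt hK.measure_lt_top).ne
  · have h1 := integral_rnDeriv_smul (f := ψ) hlac
    simp only [smul_eq_mul] at h1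
    rw [h1, hlam, integral_map hT.aemeasurable hψ.aestronglyMeasurable,
      integral_withDensity_eq_integral_toReal_smul (by fun_prop) (by simp)]
    refine integral_congr_ae ?_
    filter_upwards [h0] with p hp
    simp [ENNReal.toReal_ofReal hp]

/-- Signed version of `exists_density_of_nonneg`, obtained by writing `b = (b + C) - C`. -/
lemma exists_density {d : ℕ} {P : Type*} [MeasurableSpace P] (μ : Measure P)
    (T : P → Euc d) (hT : Measurable T) (hac : μ.map T ≪ volume)
    [IsLocallyFiniteMeasure (μ.map T)] (b : P → ℝ) (hb : Measurable b) (C : ℝ)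
    (hC : ∀ᵐ p ∂μ, |b p| ≤ C) (hC0 : 0 ≤ C) :
    ∃ h : Euc d → ℝ, LocallyIntegrable h volume ∧
      ∀ ψ : Euc d → ℝ, Continuous ψ → HasCompactSupport ψ →
        ∫ x, h x * ψ x = ∫ p, b p * ψ (T p) ∂μ := by
  obtain ⟨h₁, hl₁, hi₁⟩ := exists_density_of_nonneg μ T hT hac (fun p => b p + C)
    (by fun_prop) (C + C) (by filter_upwards [hC] with p hp; linarith [neg_le_of_abs_le hp])
    (by filter_upwards [hC] with p hp; linarith [le_of_abs_le hp])
  obtain ⟨h₂, hl₂, hi₂⟩ := exists_density_of_nonneg μ T hT hac (fun _ => C)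
    measurable_const C (by simp [hC0]) (by simp)
  refine ⟨fun x => h₁ x - h₂ x, hl₁.sub hl₂, fun ψ hψ hc => ?_⟩
  have hψT : Integrable (fun p => ψ (T p)) μ :=
    (hψ.integrable_of_hasCompactSupport hc (μ := μ.map T)).comp_measurable hT
  have e₁ := hl₁.integrable_smul_right_of_hasCompactSupport hψ hc
  have e₂ := hl₂.integrable_smul_right_of_hasCompactSupport hψ hc
  simp only [smul_eq_mul] at e₁ e₂
  have i₁ : Integrable (fun p => (b p + C) * ψ (T p)) μ := by
    refine hψT.bdd_mul (c := C + C) (by fun_prop) ?_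
    filter_upwards [hC] with p hp
    rw [Real.norm_eq_abs, abs_le]
    constructor <;> linarith [neg_le_of_abs_le hp, le_of_abs_le hp]
  have i₂ : Integrable (fun p => C * ψ (T p)) μ := hψT.const_mul C
  simp only [sub_mul]
  rw [integral_sub e₁ e₂, hi₁ ψ hψ, hi₂ ψ hψ, ← integral_sub i₁ i₂]
  congr 1 with p
  ring

/-- Vector-valued version of `exists_density`: a bounded field of vectors `g` on `(P, μ)`, pushed
forward along `T`, has a locally integrable Lebesgue density. -/
lemma exists_vector_density {d : ℕ} {P : Type*} [MeasurableSpace P] (μ : Measure P)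
    (T : P → Euc d) (hT : Measurable T) (hac : μ.map T ≪ volume)
    [IsLocallyFiniteMeasure (μ.map T)] (g : P → Euc d) (hg : Measurable g) (C : ℝ)
    (hC : ∀ᵐ p ∂μ, ‖g p‖ ≤ C) (hC0 : 0 ≤ C) :
    ∃ v : Euc d → Euc d, LocallyIntegrable v volume ∧
      ∀ F : Euc d → Euc d, Continuous F → HasCompactSupport F →
        Integrable (fun x => ⟪v x, F x⟫) volume ∧ Integrable (fun p => ⟪g p, F (T p)⟫) μ ∧
        ∫ x, ⟪v x, F x⟫ = ∫ p, ⟪g p, F (T p)⟫ ∂μ := by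
  let B := EuclideanSpace.basisFun (Fin d) ℝ
  have hbd : ∀ i, ∀ᵐ p ∂μ, |⟪g p, B i⟫| ≤ C := fun i => by
    filter_upwards [hC] with p hp
    refine (abs_real_inner_le_norm _ _).trans ?_
    simpa [B.norm_eq_one] using hp
  choose h hl hi using fun i => exists_density μ T hT hac (fun p => ⟪g p, B i⟫)
    (by fun_prop) C (hbd i) hC0
  refine ⟨fun x => ∑ i, h i x • B i, ?_, fun F hF hcF => ?_⟩
  · refine locallyIntegrable_finsetSum _ fun i _ => ?_
    rw [locallyIntegrable_iff]
    intro K hK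
    exact ((hl i).integrableOn_isCompact hK).smul_const (B i)
  have hψ : ∀ i, Continuous fun x => ⟪B i, F x⟫ := fun i => by fun_prop
  have hψc : ∀ i, HasCompactSupport fun x => ⟪B i, F x⟫ := fun i =>
    hcF.comp_left (g := fun y => ⟪B i, y⟫) (by simp)
  have e₁ : ∀ x, ⟪∑ i, h i x • B i, F x⟫ = ∑ i, h i x * ⟪B i, F x⟫ := fun x => by
    simp [sum_inner, inner_smul_left]
  have e₂ : ∀ p, ⟪g p, F (T p)⟫ = ∑ i, ⟪g p, B i⟫ * ⟪B i, F (T p)⟫ := fun p =>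
    (B.sum_inner_mul_inner _ _).symm
  have i₁ : ∀ i, Integrable (fun x => h i x * ⟪B i, F x⟫) volume := fun i =>
    (hl i).integrable_smul_right_of_hasCompactSupport (hψ i) (hψc i)
  have i₂ : ∀ i, Integrable (fun p => ⟪g p, B i⟫ * ⟪B i, F (T p)⟫) μ := fun i =>
    (((hψ i).integrable_of_hasCompactSupport (hψc i) (μ := μ.map T)).comp_measurable hT).bdd_mul
      (c := C) (by fun_prop) (hbd i)
  simp only [e₁, e₂]
  refine ⟨integrable_finsetSum _ fun i _ => i₁ i, integrable_finsetSum _ fun i _ => i₂ i, ?_⟩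
  rw [integral_finsetSum _ fun i _ => i₁ i, integral_finsetSum _ fun i _ => i₂ i]
  exact Finset.sum_congr rfl fun i _ => hi i _ (hψ i) (hψc i)

/-- The outward unit direction at `y`, with a prescribed value `e₀` at the origin. -/
def outward {d : ℕ} (e₀ y : Euc d) : Euc d := if y = 0 then e₀ else ‖y‖⁻¹ • y

lemma measurable_outward {d : ℕ} (e₀ : Euc d) : Measurable (outward e₀) :=
  Measurable.ite (measurableSet_singleton 0) measurable_const (by fun_prop)

lemma norm_outward {d : ℕ} {e₀ : Euc d} (he : ‖e₀‖ = 1) (y : Euc d) : ‖outward e₀ y‖ = 1 := by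
  unfold outward
  split_ifs with h
  · exact he
  · simp [norm_smul, h]

lemma inner_outward {d : ℕ} (e₀ y : Euc d) : ⟪outward e₀ y, y⟫ = ‖y‖ := by
  unfold outward
  split_ifs with h
  · simp [h]
  · have : ‖y‖ ≠ 0 := by simpa using h
    rw [real_inner_smul_left, real_inner_self_eq_norm_sq]
    field_simp

/-- Rays whose direction is within `1/2` of the outward one escape to infinity, uniformly in their
starting point `y`. -/
lemma norm_add_le_norm_ray {d : ℕ} {e₀ : Euc d} (he : ‖e₀‖ = 1) (y w : Euc d)
    (hw : ‖w‖ ≤ 1 / 2) (t : ℝ) (ht : 0 ≤ t) :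
    ‖y‖ + t / 2 ≤ ‖y + t • (outward e₀ y + w)‖ := by
  have h1 := real_inner_le_norm (outward e₀ y) (y + t • (outward e₀ y + w))
  rw [norm_outward he, one_mul, inner_add_right, inner_outward, inner_smul_right, inner_add_right,
    real_inner_self_eq_norm_sq, norm_outward he] at h1
  have h2 := abs_real_inner_le_norm (outward e₀ y) w
  rw [norm_outward he, one_mul] at h2
  have h3 := neg_le_of_abs_le (h2.trans hw)
  nlinarith

/-- Any locally finite measure is the divergence of a locally integrable field: each unit of mass is
sent to infinity along a cone of rays directed away from the origin. -/
lemma exists_field_of_measure {d : ℕ} (hd : 1 ≤ d) (ν : Measure (Euc d))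
    [IsLocallyFiniteMeasure ν] :
    ∃ v : Euc d → Euc d, LocallyIntegrable v volume ∧
      ∀ φ : Euc d → ℝ, ContDiff ℝ (⊤ : ℕ∞) φ → HasCompactSupport φ →
        Integrable (fun x => ⟪v x, gradient φ x⟫) volume ∧
        ∫ x, ⟪v x, gradient φ x⟫ = - ∫ x, φ x ∂ν := by
  obtain ⟨e₀, he⟩ : ∃ e₀ : Euc d, ‖e₀‖ = 1 :=
    ⟨EuclideanSpace.single ⟨0, hd⟩ 1, by simp⟩
  let W : Set (Euc d) := closedBall 0 (1 / 2)
  let ρ : Measure (Euc d) := ProbabilityTheory.cond volume W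
  have hρ : IsProbabilityMeasure ρ :=
    ProbabilityTheory.cond_isProbabilityMeasure_of_finite
      (measure_closedBall_pos volume _ (by norm_num)).ne' measure_closedBall_lt_top.ne
  have hρac : ρ ≪ volume := ProbabilityTheory.cond_absolutelyContinuous
  have hρW : ∀ᵐ w ∂ρ, ‖w‖ ≤ 1 / 2 := by
    filter_upwards [ProbabilityTheory.ae_cond_mem (μ := volume) (s := W)
      measurableSet_closedBall] with w hw
    simpa [W] using hw
  let τ : Measure ℝ := volume.restrict (Ioi 0)
  have hτ : ∀ᵐ t ∂τ, 0 < t := ae_restrict_mem measurableSet_Ioi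
  let μ : Measure ((Euc d × ℝ) × Euc d) := (ν.prod τ).prod ρ
  let g : (Euc d × ℝ) × Euc d → Euc d := fun p => outward e₀ p.1.1 + p.2
  let T : (Euc d × ℝ) × Euc d → Euc d := fun p => p.1.1 + p.1.2 • g p
  have ho := measurable_outward e₀
  have hg : Measurable g := by fun_prop
  have hT : Measurable T := by fun_prop
  have hμt : ∀ᵐ p ∂(ν.prod τ), 0 < p.2 := Measure.quasiMeasurePreserving_snd.ae hτ
  have hμ1 : ∀ᵐ p ∂μ, 0 < p.1.2 := Measure.quasiMeasurePreserving_fst.ae hμt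
  have hμ2 : ∀ᵐ p ∂μ, ‖p.2‖ ≤ 1 / 2 := Measure.quasiMeasurePreserving_snd.ae hρW
  have hac : μ.map T ≪ volume := by
    refine Measure.AbsolutelyContinuous.mk fun N hN hN0 => ?_
    rw [Measure.map_apply hT hN, Measure.measure_prod_null (hT hN)]
    filter_upwards [hμt] with p hp
    -- for a fixed starting point and a fixed time `t > 0`, the direction is mapped to the
    -- end point by a nondegenerate affine map
    refine hρac ?_
    have : (Prod.mk p ⁻¹' (T ⁻¹' N)) =
        (fun w => p.2 • w) ⁻¹' ((fun z => (p.1 + p.2 • outward e₀ p.1) + z) ⁻¹' N) := by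
      ext w
      simp only [mem_preimage, T, g, smul_add, add_assoc]
    rw [this, Measure.addHaar_preimage_smul _ hp.ne', measure_preimage_add, hN0, mul_zero]
  have hlf : IsLocallyFiniteMeasure (μ.map T) := by
    refine ⟨fun x => ⟨ball 0 (‖x‖ + 1), isOpen_ball.mem_nhds (by simp), ?_⟩⟩
    set R := ‖x‖ + 1
    rw [Measure.map_apply hT measurableSet_ball]
    calc μ (T ⁻¹' ball 0 R) ≤ μ ((closedBall 0 R ×ˢ Iic (2 * R)) ×ˢ univ) := by
          refine measure_mono_ae ?_
          filter_upwards [hμ1, hμ2] with p h1 h2 h3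
          have h4 := norm_add_le_norm_ray he p.1.1 p.2 h2 p.1.2 h1.le
          have h5 : ‖p.1.1 + p.1.2 • (outward e₀ p.1.1 + p.2)‖ < R := by
            exact mem_ball_zero_iff.1 h3
          have h6 := norm_nonneg p.1.1
          have : ‖p.1.1‖ ≤ R ∧ p.1.2 ≤ 2 * R := ⟨by linarith, by linarith⟩
          show p ∈ (closedBall (0 : Euc d) R ×ˢ Iic (2 * R)) ×ˢ univ
          simpa using this
      _ = ν (closedBall 0 R) * τ (Iic (2 * R)) * ρ univ := by
          rw [Measure.prod_prod, Measure.prod_prod]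
      _ < ⊤ := by
          refine ENNReal.mul_lt_top (ENNReal.mul_lt_top measure_closedBall_lt_top ?_)
            (measure_lt_top _ _)
          rw [Measure.restrict_apply measurableSet_Iic, Iic_inter_Ioi]
          exact measure_Ioc_lt_top
  obtain ⟨v, hv, hvi⟩ := exists_vector_density μ T hT hac g hg (3 / 2) (by
    filter_upwards [hμ2] with p hp
    refine (norm_add_le _ _).trans ?_
    rw [norm_outward he]
    linarith) (by norm_num)
  refine ⟨v, hv, fun φ hφ hφc => ?_⟩
  have hφ1 : ContDiff ℝ 1 φ := hφ.of_le (by exact_mod_cast le_top)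
  have hgr : gradient φ = (InnerProductSpace.toDual ℝ (Euc d)).symm ∘ fderiv ℝ φ := rfl
  have hF : Continuous (gradient φ) := by
    rw [hgr]
    exact (LinearIsometryEquiv.continuous _).comp (hφ1.continuous_fderiv one_ne_zero)
  have hFc : HasCompactSupport (gradient φ) := by
    rw [hgr]
    exact (hφc.fderiv ℝ).comp_left (map_zero _)
  obtain ⟨i₁, i₂, heq⟩ := hvi _ hF hFc
  refine ⟨i₁, ?_⟩
  rw [heq, integral_prod_symm _ i₂]
  have key : ∀ᵐ w ∂ρ,
      ∫ z, ⟪g (z, w), gradient φ (T (z, w))⟫ ∂(ν.prod τ) = - ∫ y, φ y ∂ν := by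
    filter_upwards [i₂.prod_left_ae, hρW] with w hw hwW
    rw [integral_prod _ hw, ← integral_neg]
    congr 1 with y
    -- the fundamental theorem of calculus along the ray from `y` with direction `u`
    set u := outward e₀ y + w with hu
    let f : ℝ → ℝ := fun t => φ (y + t • u)
    have hf : ContDiff ℝ 1 f := hφ1.comp (by fun_prop)
    have hder : ∀ t, deriv f t = ⟪u, gradient φ (y + t • u)⟫ := fun t => by
      have h1 : HasDerivAt (fun t : ℝ => y + t • u) u t := by
        simpa using ((hasDerivAt_id t).smul_const u).const_add y
      have h2 := ((hφ1.differentiable one_ne_zero) (y + t • u)).hasFDerivAt.comp_hasDerivAt t h1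
      rw [real_inner_comm, inner_gradient_left]
      exact h2.deriv
    have hune : u ≠ 0 := by
      intro h
      have := norm_add_le_norm_ray he y w hwW 1 zero_le_one
      rw [← hu, h] at this
      simp at this
      linarith
    have hfc : HasCompactSupport f :=
      hφc.comp_isClosedEmbedding
        ((Homeomorph.addLeft y).isClosedEmbedding.comp (isClosedEmbedding_smul_left hune))
    have := HasCompactSupport.integral_Ioi_deriv_eq hf hfc 0
    simp only [hder] at this
    have h0 : f 0 = φ y := by simp [f]
    rw [← h0]
    exact this
  rw [integral_congr_ae key]
  simp

/-- For every locally finite nonnegative Borel measure `ν` on `ℝ^d`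
there exists a locally integrable vector field `v` connecting `ν` and `m_d`, i.e. with
`div v = ν − m_d` weakly. -/
theorem stmt_15 (d : ℕ) (hd : 1 ≤ d) (ν : Measure (Euc d)) [IsLocallyFiniteMeasure ν] :
    ∃ v : Euc d → Euc d, LocallyIntegrable v volume ∧ Connects v ν := by
  obtain ⟨v₁, hl₁, h₁⟩ := exists_field_of_measure hd ν
  obtain ⟨v₂, hl₂, h₂⟩ := exists_field_of_measure hd (volume : Measure (Euc d))
  refine ⟨v₁ - v₂, hl₁.sub hl₂, fun φ hφ hφc => ?_⟩
  obtain ⟨i₁, e₁⟩ := h₁ φ hφ hφc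
  obtain ⟨i₂, e₂⟩ := h₂ φ hφ hφc
  simp only [Pi.sub_apply, inner_sub_left]
  rw [integral_sub i₁ i₂, e₁, e₂]
  ring
end
end

section
/- There is a constant C > 0 depending only on the dimension d such that for all x, y ∈ ℝ^d, there exists a locally integrable vector field v : ℝ^d → ℝ^d with ‖v‖_∞ ≤ C (the bound being independent of x and y) and div v = η_x − η_y weakly, i.e. ∫ ⟨v(ξ), ∇φ(ξ)⟩ dm_d(ξ) = −∫ φ d(η_x − η_y) for every smooth compactly supported φ : ℝ^d → ℝ, where η_x denotes the uniform probability measure on the closed unit ball centered at x. -/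
/-!
Transport `η_x` to `η_y` by translating the ball in a straight line. With `u = y - x` and `B_t` the
closed unit ball around `x + t u`, the time average of the momentum of this motion is
`v ξ = |B|⁻¹ τ(ξ) u`, where `τ(ξ)` is the measure of the times `t ∈ [0, 1]` with `ξ ∈ B_t`.

The field is bounded because two times `s, t` at which `ξ` is covered satisfy `|s - t| ‖u‖ ≤ 2`, so
`τ(ξ) ‖u‖ ≤ 2` (`coverTime_mul_norm_le`). The weak divergence comes from Fubini and the fundamental
theorem of calculus: `∫ τ ∂_u φ = ∫_0^1 ∫_{B_t} ∂_u φ = ∫_{B_0} ∫_0^1 d/dt φ(ξ + t u)`, which is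
`∫_{B_1} φ - ∫_{B_0} φ` (`integral_coverTime_mul`).
-/

open MeasureTheory Metric Set Bornology
open scoped ENNReal RealInnerProductSpace

noncomputable section

/-- The measure of the set of times `t ∈ [0, 1]` at which the closed unit ball around `x + t u`
contains `ξ`. -/
def coverTime {d : ℕ} (x u ξ : Euc d) : ℝ :=
  ∫ t in Icc (0 : ℝ) 1, (closedBall x 1).indicator (fun _ => (1 : ℝ)) (ξ - t • u)

lemma measurable_cover {d : ℕ} (x u : Euc d) :
    Measurable fun p : Euc d × ℝ =>
      (closedBall x 1).indicator (fun _ => (1 : ℝ)) (p.1 - p.2 • u) :=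
  (measurable_const.indicator isClosed_closedBall.measurableSet).comp (by fun_prop)

lemma measurable_coverTime {d : ℕ} (x u : Euc d) : Measurable (coverTime x u) :=
  ((measurable_cover x u).stronglyMeasurable.integral_prod_right'
    (ν := volume.restrict (Icc (0 : ℝ) 1))).measurable

lemma coverTime_nonneg {d : ℕ} (x u ξ : Euc d) : 0 ≤ coverTime x u ξ :=
  integral_nonneg fun _ => indicator_nonneg (fun _ _ => zero_le_one) _

/-- Two covering times of the same point differ by at most `2 / ‖u‖`. -/
lemma coverTime_mul_norm_le {d : ℕ} (x u ξ : Euc d) : coverTime x u ξ * ‖u‖ ≤ 2 := by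
  rcases eq_or_ne u 0 with rfl | hu
  · simp
  have hu' : 0 < ‖u‖ := norm_pos_iff.2 hu
  set S : Set ℝ := (fun t : ℝ => ξ - t • u) ⁻¹' closedBall x 1 with hS
  have hSm : MeasurableSet S :=
    isClosed_closedBall.measurableSet.preimage (by fun_prop)
  have h1 : coverTime x u ξ = (volume.restrict (Icc (0 : ℝ) 1)).real S := by
    rw [← integral_indicator_one hSm]
    rfl
  have h2 : volume S ≤ ENNReal.ofReal (2 / ‖u‖) := by
    refine (Real.volume_le_diam S).trans (Metric.ediam_le_of_forall_dist_le ?_)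
    intro s hs t ht
    have hst : dist (ξ - s • u) (ξ - t • u) ≤ 2 := by
      have := dist_triangle_right (ξ - s • u) (ξ - t • u) x
      have h3 : dist (ξ - s • u) x ≤ 1 := hs
      have h4 : dist (ξ - t • u) x ≤ 1 := ht
      linarith
    rw [dist_sub_left, dist_eq_norm, ← sub_smul, norm_smul] at hst
    rw [le_div_iff₀ hu', dist_eq_norm]
    exact hst
  have h3 : coverTime x u ξ ≤ 2 / ‖u‖ := by
    rw [h1]
    exact ENNReal.toReal_le_of_le_ofReal (by positivity)
      ((Measure.restrict_apply_le _ _).trans h2)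
  rwa [le_div_iff₀ hu'] at h3

/-- The weak divergence of `coverTime x u • u`, in terms of ball integrals. -/
lemma integral_coverTime_mul {d : ℕ} (x u : Euc d) (φ : Euc d → ℝ)
    (hφ : ContDiff ℝ (⊤ : ℕ∞) φ) (hc : HasCompactSupport φ) :
    ∫ ξ, coverTime x u ξ * fderiv ℝ φ ξ u =
      (∫ ξ in closedBall (x + u) 1, φ ξ) - ∫ ξ in closedBall x 1, φ ξ := by
  set g : Euc d → ℝ := fun ξ => fderiv ℝ φ ξ u with hg
  have hgc : Continuous g := (hφ.continuous_fderiv (by simp)).clm_apply continuous_const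
  have hgs : HasCompactSupport g := hc.fderiv_apply ℝ u
  have hgi : Integrable g := hgc.integrable_of_hasCompactSupport hgs
  have hBm : MeasurableSet (closedBall x (1 : ℝ)) := isClosed_closedBall.measurableSet
  have hφB : ∀ z : Euc d, IntegrableOn (fun ξ => φ (ξ + z)) (closedBall x 1) := fun z =>
    (hφ.continuous.comp (by fun_prop)).continuousOn.integrableOn_compact
      (isCompact_closedBall x 1)
  have hint : Integrable (fun p : Euc d × ℝ =>
      (closedBall x 1).indicator (fun _ => (1 : ℝ)) (p.1 - p.2 • u) * g p.1)
      (volume.prod (volume.restrict (Icc (0 : ℝ) 1))) := by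
    refine (hgi.comp_fst _).bdd_mul (c := 1)
      (measurable_cover x u).aestronglyMeasurable (Filter.Eventually.of_forall fun p => ?_)
    refine (norm_indicator_le_norm_self _ _).trans (by simp)
  have hint2 : Integrable (fun p : ℝ × Euc d => g (p.2 + p.1 • u))
      ((volume.restrict (Icc (0 : ℝ) 1)).prod (volume.restrict (closedBall x 1))) := by
    rw [Measure.prod_restrict]
    exact (hgc.comp (by fun_prop)).continuousOn.integrableOn_compact
      (isCompact_Icc.prod (isCompact_closedBall x 1))
  calc ∫ ξ, coverTime x u ξ * g ξ
      = ∫ ξ, ∫ t in Icc (0 : ℝ) 1,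
          (closedBall x 1).indicator (fun _ => (1 : ℝ)) (ξ - t • u) * g ξ := by
        simp only [coverTime, integral_mul_const]
    _ = ∫ t in Icc (0 : ℝ) 1, ∫ ξ,
          (closedBall x 1).indicator (fun _ => (1 : ℝ)) (ξ - t • u) * g ξ :=
        integral_integral_swap hint
    _ = ∫ t in Icc (0 : ℝ) 1, ∫ ξ in closedBall x 1, g (ξ + t • u) := by
        congr 1 with t
        rw [← integral_add_right_eq_self _ (t • u), ← integral_indicator hBm]
        congr 1 with ξ
        by_cases h : ξ ∈ closedBall x (1 : ℝ) <;> simp [indicator, h]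
    _ = ∫ ξ in closedBall x 1, ∫ t in Icc (0 : ℝ) 1, g (ξ + t • u) :=
        integral_integral_swap hint2
    _ = ∫ ξ in closedBall x 1, (φ (ξ + u) - φ ξ) := by
        congr 1 with ξ
        have hd : ∀ t ∈ uIcc (0 : ℝ) 1,
            HasDerivAt (fun t : ℝ => φ (ξ + t • u)) (g (ξ + t • u)) t := fun t _ => by
          have h1 : HasDerivAt (fun t : ℝ => ξ + t • u) u t := by
            simpa using ((hasDerivAt_id t).smul_const u).const_add ξ
          exact ((hφ.differentiable (by simp)) _).hasFDerivAt.comp_hasDerivAt t h1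
        have hi : IntervalIntegrable (fun t : ℝ => g (ξ + t • u)) volume 0 1 :=
          (hgc.comp (by fun_prop)).intervalIntegrable _ _
        rw [integral_Icc_eq_integral_Ioc, ← intervalIntegral.integral_of_le zero_le_one,
          intervalIntegral.integral_eq_sub_of_hasDerivAt hd hi]
        simp
    _ = (∫ ξ in closedBall x 1, φ (ξ + u)) - ∫ ξ in closedBall x 1, φ ξ :=
        integral_sub (hφB u) (by simpa [IntegrableOn] using hφB 0)
    _ = _ := by
        congr 1
        rw [← integral_indicator hBm, ← integral_indicator isClosed_closedBall.measurableSet,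
          ← integral_add_right_eq_self ((closedBall (x + u) 1).indicator φ) u]
        congr 1 with ξ
        simp [indicator]

lemma integral_eta {d : ℕ} (x : Euc d) (φ : Euc d → ℝ) :
    ∫ ξ, φ ξ ∂eta x =
      (volume.real (closedBall (0 : Euc d) 1))⁻¹ * ∫ ξ in closedBall x 1, φ ξ := by
  rw [eta, integral_smul_measure, Measure.addHaar_closedBall_center, ENNReal.toReal_inv]
  rfl


/-- There is a constant `C > 0` depending only on `d` such that for all
`x, y ∈ ℝ^d` there is a locally integrable vector field `v` with `‖v‖_∞ ≤ C` and
`div v = η_x − η_y` weakly, where `η_x` is the uniform probability measure on the closed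
unit ball centered at `x`. -/
theorem stmt_17 (d : ℕ) (hd : 1 ≤ d) :
    ∃ C : ℝ, 0 < C ∧
      ∀ x y : Euc d,
        ∃ v : Euc d → Euc d, LocallyIntegrable v volume ∧
          essSup (fun ξ => (‖v ξ‖₊ : ℝ≥0∞)) volume ≤ ENNReal.ofReal C ∧
          ∀ φ : Euc d → ℝ, ContDiff ℝ (⊤ : ℕ∞) φ → HasCompactSupport φ →
            ∫ ξ, ⟪v ξ, gradient φ ξ⟫ ∂volume =
              (∫ ξ, φ ξ ∂eta y) - ∫ ξ, φ ξ ∂eta x := by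
  set c : ℝ := (volume.real (closedBall (0 : Euc d) 1))⁻¹ with hc
  have hc0 : 0 < c := inv_pos.2 (ENNReal.toReal_pos
    (measure_closedBall_pos _ _ one_pos).ne' measure_closedBall_lt_top.ne)
  refine ⟨c * 2, by positivity, fun x y => ?_⟩
  set u : Euc d := y - x with hu
  set v : Euc d → Euc d := fun ξ => (c * coverTime x u ξ) • u with hv
  have hvm : Measurable v := ((measurable_coverTime x u).const_mul c).smul_const u
  have hvb : ∀ ξ, ‖v ξ‖ ≤ c * 2 := fun ξ => by
    rw [hv, norm_smul, Real.norm_of_nonneg (mul_nonneg hc0.le (coverTime_nonneg x u ξ)), mul_assoc]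
    exact mul_le_mul_of_nonneg_left (coverTime_mul_norm_le x u ξ) hc0.le
  refine ⟨v, ?_, ?_, fun φ hφ hcs => ?_⟩
  · exact (locallyIntegrable_const (c * 2)).mono hvm.aestronglyMeasurable
      (Filter.Eventually.of_forall fun ξ => (hvb ξ).trans (le_abs_self _))
  · refine essSup_le_of_ae_le _ (Filter.Eventually.of_forall fun ξ => ?_)
    change ‖v ξ‖ₑ ≤ _
    rw [← ofReal_norm]
    exact ENNReal.ofReal_le_ofReal (hvb ξ)
  · have h : ∀ ξ, ⟪v ξ, gradient φ ξ⟫ = c * (coverTime x u ξ * fderiv ℝ φ ξ u) := fun ξ => by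
      rw [hv, real_inner_smul_left, real_inner_comm, gradient,
        InnerProductSpace.toDual_symm_apply, mul_assoc]
    simp only [h, integral_const_mul, integral_coverTime_mul x u φ hφ hcs, integral_eta]
    rw [hu, add_sub_cancel, mul_sub]
end
end
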